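/- arXiv:2007.14944 — 5 statements merged into one kernel-verified Lean document; each statement's English description precedes it below -/
import Mathlib

section
/- For every 0 < ε ≤ 1/4 and k ∈ ℕ there exists δ such that the following holds for all real numbers ℓ, n > δ with 1+ε < ℓ/n < 3ek. Define K = 1 − (n/ℓ)·(1+ε/8)/ln n, ℓ' = ℓ·K^k − n^{2/3}, and n' = n·K^{k−1}·(1 − ((1−ε/8)/ln n)·K^k) + n^{2/3}. Then ℓ' ≥ (1 − 2k/ln n)·ℓ, n' ≥ (1 − 3k/ln n)·n, and ℓ'/n' ≥ (1 + ε/(16 ln n))·(ℓ/n). -/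
/-!
Put `x = 1 / log n`, `a = (n / ℓ) (1 + ε / 8)` and `c = 1 - ε / 8`, so that `K = 1 - a x`. The error
`n ^ (2 / 3)` is eventually below `x² n`, hence below `x² ℓ`. Up to `O(x²)`, the quotient
`(ℓ' / ℓ) / (n' / n)` is therefore `K / (1 - c x)`, that is, `1 + (c - a) x`. The assumption
`1 + ε < ℓ / n` gives `a < (1 + ε / 8) / (1 + ε)`, which keeps `c - a` above the required gain
`ε / 16` by a margin depending only on `ε`, as long as `ε < 11 / 3`; for `x` small in terms of `ε`
and `k` this margin absorbs the `O(x²)` terms.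
-/

open Filter Real

section Bernoulli

variable {x K c ℓ s : ℝ}

theorem one_sub_mul_le_pow (hK : -1 ≤ K) (hxK : 1 - x ≤ K) (k : ℕ) : 1 - k * x ≤ K ^ k :=
  calc 1 - k * x = 1 + k * ((1 - x) - 1) := by ring
    _ ≤ 1 + k * (K - 1) := by gcongr
    _ ≤ K ^ k := one_add_mul_sub_le_pow hK k

theorem one_sub_two_mul_mul_le_mul_pow_sub {k : ℕ} (hk : 0 < k) (hx : 0 ≤ x) (hK : -1 ≤ K)
    (hxK : 1 - x ≤ K) (hℓ : 0 ≤ ℓ) (hs : s ≤ x * ℓ) :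
    (1 - 2 * k * x) * ℓ ≤ ℓ * K ^ k - s := by
  have hk' : (1 : ℝ) ≤ k := mod_cast hk
  have pow_bound : ℓ * (1 - k * x) ≤ ℓ * K ^ k := by
    gcongr
    exact one_sub_mul_le_pow hK hxK k
  have error_bound : s ≤ k * (x * ℓ) := hs.trans (le_mul_of_one_le_left (by positivity) hk')
  linarith

theorem one_sub_mul_le_pow_mul_one_sub (hx : 0 ≤ x) (hx1 : x ≤ 1) (hxK : 1 - x ≤ K) (hK : K ≤ 1)
    (hc : c ≤ 1) (m : ℕ) :
    1 - ((m : ℝ) + 1) * x ≤ K ^ m * (1 - c * x * K ^ (m + 1)) := by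
  have hK0 : 0 ≤ K := by linarith
  have hcK : c * K ^ (m + 1) ≤ 1 :=
    mul_le_of_le_one_left (pow_nonneg hK0 _) hc |>.trans (pow_le_one₀ hK0 hK)
  have hcxK : c * x * K ^ (m + 1) ≤ x := by
    rw [mul_right_comm]
    exact mul_le_of_le_one_left hx hcK
  calc 1 - ((m : ℝ) + 1) * x ≤ (1 - x) ^ (m + 1) :=
        mod_cast one_sub_mul_le_pow (by linarith) le_rfl (m + 1)
    _ = (1 - x) ^ m * (1 - x) := pow_succ _ _
    _ ≤ K ^ m * (1 - c * x * K ^ (m + 1)) := by gcongr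

end Bernoulli

section Gain

variable {x a c η : ℝ}

theorem one_add_mul_mul_one_sub_add_le {k Q : ℝ} (hx : 0 ≤ x) (hk : 0 ≤ k) (ha : 0 ≤ a)
    (hη : 0 ≤ η) (hc : c ≤ 1) (hgap : (k + 4) * x ≤ c - a - η) (hQ : 1 - k * x ≤ Q) :
    (1 + η * x) * (1 - c * x * Q + 2 * x ^ 2) ≤ 1 - a * x - 2 * x ^ 2 := by
  have hkx : 0 ≤ k * x := by positivity
  have hc0 : 0 ≤ c := by linarith
  have hcQ : c - k * x ≤ c * Q :=
    calc c - k * x ≤ c * (1 - k * x) := by linarith [mul_le_of_le_one_left hkx hc]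
      _ ≤ c * Q := by gcongr
  have factor_le : 1 - c * x * Q + 2 * x ^ 2 ≤ 1 - c * x + (k + 2) * x ^ 2 := by
    linarith [mul_le_mul_of_nonneg_left hcQ hx]
  have factor_le_one : 1 - c * x * Q + 2 * x ^ 2 ≤ 1 := by
    have : (k + 2) * x ≤ c := by linarith
    linarith [mul_le_mul_of_nonneg_left this hx]
  calc (1 + η * x) * (1 - c * x * Q + 2 * x ^ 2)
      = (1 - c * x * Q + 2 * x ^ 2) + η * x * (1 - c * x * Q + 2 * x ^ 2) := by ring
    _ ≤ (1 - c * x + (k + 2) * x ^ 2) + η * x * 1 := by gcongr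
    _ = 1 - a * x - 2 * x ^ 2 - x * (c - a - η - (k + 4) * x) := by ring
    _ ≤ 1 - a * x - 2 * x ^ 2 := sub_le_self _ (mul_nonneg hx (by linarith))

theorem one_add_mul_mul_pow_mul_add_sq_le {m : ℕ} (hx : 0 ≤ x) (ha : 0 ≤ a) (hη : 0 ≤ η)
    (hc : c ≤ 1) (hgap : ((m : ℝ) + 5) * x ≤ c - a - η) :
    (1 + η * x) * ((1 - a * x) ^ m * (1 - c * x * (1 - a * x) ^ (m + 1)) + x ^ 2) ≤
      (1 - a * x) ^ (m + 1) - x ^ 2 := by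
  have hmx : 0 ≤ (m : ℝ) * x := by positivity
  have ha1 : a ≤ 1 := by linarith
  have hax : a * x ≤ x := mul_le_of_le_one_left hx ha1
  have hK : -1 ≤ 1 - a * x := by linarith
  have hamx : a * (m * x) ≤ 1 / 4 :=
    calc a * (m * x) ≤ a * (1 - a) := by gcongr; linarith
      _ ≤ 1 / 4 := by linarith [sq_nonneg (2 * a - 1)]
  have half_le_pow : 1 / 2 ≤ (1 - a * x) ^ m :=
    calc 1 / 2 ≤ 1 - m * (a * x) := by linarith
      _ ≤ (1 - a * x) ^ m := one_sub_mul_le_pow hK le_rfl m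
  have pow_succ_bound : 1 - ((m : ℝ) + 1) * x ≤ (1 - a * x) ^ (m + 1) :=
    mod_cast one_sub_mul_le_pow hK (by linarith : 1 - x ≤ 1 - a * x) (m + 1)
  have first_order := one_add_mul_mul_one_sub_add_le hx (by positivity) ha hη hc
    (by linarith : ((m : ℝ) + 1 + 4) * x ≤ c - a - η) pow_succ_bound
  rw [pow_succ _ m] at first_order ⊢
  set P := (1 - a * x) ^ m
  have sq_le : x ^ 2 ≤ P * (2 * x ^ 2) := by
    linarith [mul_le_mul_of_nonneg_right half_le_pow (sq_nonneg x)]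
  calc (1 + η * x) * (P * (1 - c * x * (P * (1 - a * x))) + x ^ 2)
      ≤ (1 + η * x) * (P * (1 - c * x * (P * (1 - a * x))) + P * (2 * x ^ 2)) := by gcongr
    _ = P * ((1 + η * x) * (1 - c * x * (P * (1 - a * x)) + 2 * x ^ 2)) := by ring
    _ ≤ P * (1 - a * x - 2 * x ^ 2) := by gcongr
    _ ≤ P * (1 - a * x) - x ^ 2 := by linarith

end Gain

theorem mul_div_le_mul_sub_div_mul_add {g A B r s ℓ n : ℝ} (hn : 0 < n) (hnℓ : n ≤ ℓ) (hr : 0 ≤ r)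
    (hg : 0 ≤ g) (hs : s ≤ r * n) (hB : 0 < n * B + s) (h : g * (B + r) ≤ A - r) :
    g * (ℓ / n) ≤ (ℓ * A - s) / (n * B + s) := by
  have hℓ : 0 < ℓ := hn.trans_le hnℓ
  rw [le_div_iff₀ hB]
  calc g * (ℓ / n) * (n * B + s) ≤ g * (ℓ / n) * (n * B + r * n) := by gcongr
    _ = ℓ * (g * (B + r)) := by field_simp
    _ ≤ ℓ * (A - r) := by gcongr
    _ = ℓ * A - r * ℓ := by ring
    _ ≤ ℓ * A - s := by gcongr; exact hs.trans (by gcongr)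

theorem eventually_rpow_le_inv_log_pow_mul {β : ℝ} (hβ : β < 1) (j : ℕ) :
    ∀ᶠ n : ℝ in atTop, n ^ β ≤ (log n)⁻¹ ^ j * n := by
  have log_pow_bound :=
    (isLittleO_log_rpow_rpow_atTop (j : ℝ) (sub_pos.2 hβ)).eventuallyLE
  filter_upwards [log_pow_bound, eventually_gt_atTop 1] with n hlog hn
  have hn0 : 0 < n := one_pos.trans hn
  have hlog0 : 0 < log n := log_pos hn
  rw [rpow_natCast, norm_of_nonneg (by positivity), norm_of_nonneg (by positivity)] at hlog
  rw [inv_pow, ← div_eq_inv_mul, le_div_iff₀ (by positivity)]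
  calc n ^ β * log n ^ j ≤ n ^ β * n ^ (1 - β) := by gcongr
    _ = n := by rw [← rpow_add hn0, add_sub_cancel, rpow_one]

theorem eventually_mul_inv_log_le (C : ℝ) {γ : ℝ} (hγ : 0 < γ) :
    ∀ᶠ n : ℝ in atTop, C * (log n)⁻¹ ≤ γ := by
  have : Tendsto (fun n : ℝ ↦ C * (log n)⁻¹) atTop (nhds 0) := by
    simpa only [mul_zero, Pi.inv_apply] using tendsto_log_atTop.inv_tendsto_atTop.const_mul C
  exact this.eventually_le_const hγ

theorem gain_margin_pos {ε : ℝ} (hε : 0 < ε) (hε' : ε < 11 / 3) :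
    0 < 1 - ε / 8 - (1 + ε / 8) / (1 + ε) - ε / 16 := by
  have : 1 - ε / 8 - (1 + ε / 8) / (1 + ε) - ε / 16 = ε * (11 - 3 * ε) / (16 * (1 + ε)) := by
    field_simp
    ring
  rw [this]
  exact div_pos (mul_pos hε (by linarith)) (by positivity)

theorem one_step_bounds {x a c η ℓ n s K : ℝ} {m : ℕ} (hx : 0 < x) (ha : 0 ≤ a) (hη : 0 ≤ η)
    (hc : c ≤ 1) (hgap : ((m : ℝ) + 5) * x ≤ c - a - η) (hn : 0 < n) (hnℓ : n ≤ ℓ) (hs : 0 ≤ s)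
    (hs' : s ≤ x ^ 2 * n) (hK : K = 1 - a * x) :
    (1 - 2 * (m + 1 : ℕ) * x) * ℓ ≤ ℓ * K ^ (m + 1) - s ∧
      (1 - 3 * (m + 1 : ℕ) * x) * n ≤ n * (K ^ m * (1 - c * x * K ^ (m + 1))) + s ∧
      (1 + η * x) * (ℓ / n) ≤
        (ℓ * K ^ (m + 1) - s) / (n * (K ^ m * (1 - c * x * K ^ (m + 1))) + s) := by
  have hℓ : 0 < ℓ := hn.trans_le hnℓ
  have hmx : 0 < ((m : ℝ) + 1) * x := by positivity
  have hmx1 : ((m : ℝ) + 1) * x < 1 := by linarith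
  have hx1 : x ≤ 1 := by linarith [mul_nonneg (Nat.cast_nonneg (α := ℝ) m) hx.le]
  have hK1 : K ≤ 1 := hK.trans_le (sub_le_self _ (by positivity))
  have hxK : 1 - x ≤ K :=
    hK ▸ sub_le_sub_left (mul_le_of_le_one_left hx.le (by linarith)) 1
  have error_le : s ≤ x * ℓ :=
    calc s ≤ x ^ 2 * n := hs'
      _ ≤ x * ℓ := by gcongr; exact pow_le_of_le_one hx.le hx1 two_ne_zero
  have n_bound : (1 - ((m : ℝ) + 1) * x) * n ≤
      n * (K ^ m * (1 - c * x * K ^ (m + 1))) + s := by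
    rw [mul_comm]
    refine le_add_of_le_of_nonneg (mul_le_mul_of_nonneg_left ?_ hn.le) hs
    exact one_sub_mul_le_pow_mul_one_sub hx.le hx1 hxK hK1 hc m
  refine ⟨one_sub_two_mul_mul_le_mul_pow_sub m.succ_pos hx.le (by linarith) hxK hℓ.le error_le,
    ?_, ?_⟩
  · refine le_trans ?_ n_bound
    gcongr
    push_cast
    linarith
  · exact mul_div_le_mul_sub_div_mul_add hn hnℓ (sq_nonneg x) (by positivity) hs'
      ((mul_pos (sub_pos.2 hmx1) hn).trans_le n_bound)
      (hK ▸ one_add_mul_mul_pow_mul_add_sq_le hx.le ha hη hc hgap)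

theorem div_mul_le_div_of_le_div {b r ℓ n : ℝ} (hb : 0 ≤ b) (hr : 0 < r) (h : r ≤ ℓ / n) :
    n / ℓ * b ≤ b / r := by
  rw [← inv_div, inv_mul_eq_div]
  gcongr

theorem stmt_8_general {ε : ℝ} {k : ℕ} (hε : 0 < ε) (hε' : ε < 11 / 3) (hk : 0 < k) :
    ∃ δ : ℝ, ∀ ℓ n : ℝ, δ < n → 1 + ε < ℓ / n →
      ∀ K ℓ' n' : ℝ,
        K = 1 - n / ℓ * ((1 + ε / 8) / log n) →
        ℓ' = ℓ * K ^ k - n ^ ((2 : ℝ) / 3) →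
        n' = n * K ^ (k - 1) * (1 - (1 - ε / 8) / log n * K ^ k) + n ^ ((2 : ℝ) / 3) →
        (1 - 2 * k / log n) * ℓ ≤ ℓ' ∧
        (1 - 3 * k / log n) * n ≤ n' ∧
        (1 + ε / (16 * log n)) * (ℓ / n) ≤ ℓ' / n' := by
  obtain ⟨m, rfl⟩ := Nat.exists_eq_succ_of_ne_zero hk.ne'
  obtain ⟨δ, hδ⟩ := eventually_atTop.1 <| (eventually_gt_atTop (1 : ℝ)).and <|
    (eventually_mul_inv_log_le ((m : ℝ) + 5) (gain_margin_pos hε hε')).and <|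
      eventually_rpow_le_inv_log_pow_mul (by norm_num : (2 : ℝ) / 3 < 1) 2
  refine ⟨δ, fun ℓ n hn hℓn K ℓ' n' hK hℓ' hn' ↦ ?_⟩
  obtain ⟨hn1, hgap, herror⟩ := hδ n hn.le
  have hn0 : 0 < n := one_pos.trans hn1
  have hnℓ : n ≤ ℓ := (one_le_div hn0).1 (by linarith)
  have hℓ0 : 0 < ℓ := hn0.trans_le hnℓ
  have hdrift : n / ℓ * (1 + ε / 8) ≤ (1 + ε / 8) / (1 + ε) :=
    div_mul_le_div_of_le_div (by positivity) (by positivity) hℓn.le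
  have bounds := one_step_bounds (c := 1 - ε / 8) (inv_pos.2 (log_pos hn1))
    (by positivity : 0 ≤ n / ℓ * (1 + ε / 8)) (by positivity : 0 ≤ ε / 16) (by linarith)
    (hgap.trans (by gcongr)) hn0 hnℓ (rpow_nonneg hn0.le _) herror rfl
  subst hℓ' hn' hK
  simpa only [Nat.succ_eq_add_one, Nat.add_sub_cancel, div_eq_mul_inv, mul_inv, mul_assoc]
    using bounds

theorem stmt_8 :
    ∀ (ε : ℝ) (k : ℕ), 0 < ε → ε ≤ 1 / 4 → 0 < k →
    ∃ δ : ℝ, ∀ ℓ n : ℝ, δ < ℓ → δ < n →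
      1 + ε < ℓ / n → ℓ / n < 3 * Real.exp 1 * k →
      ∀ K ℓ' n' : ℝ,
        K = 1 - n / ℓ * ((1 + ε / 8) / Real.log n) →
        ℓ' = ℓ * K ^ k - n ^ ((2 : ℝ) / 3) →
        n' = n * K ^ (k - 1) * (1 - (1 - ε / 8) / Real.log n * K ^ k) +
              n ^ ((2 : ℝ) / 3) →
        (1 - 2 * k / Real.log n) * ℓ ≤ ℓ' ∧
        (1 - 3 * k / Real.log n) * n ≤ n' ∧
        (1 + ε / (16 * Real.log n)) * (ℓ / n) ≤ ℓ' / n' := by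
  intro ε k hε hε' hk
  obtain ⟨δ, hδ⟩ := stmt_8_general hε (by linarith) hk
  exact ⟨δ, fun ℓ n _ hn hℓn _ ↦ hδ ℓ n hn hℓn⟩
end

section
/- Let X be a non-negative random variable, not identically 0, determined by n independent trials T₁,…,T_n (i.e. X is a measurable function on the product of n probability spaces). Let r > 0 and let Ω* be a measurable subset of the product space. Suppose that for every outcome x = (x₁,…,x_n) of the trials there exist non-negative reals b₁,…,b_n such that (1) Σ_i b_i² ≤ r·X(x), and (2) for any outcome y, X(y) ≥ X(x) − Σ_{i : x_i ≠ y_i} b_i. Then for any t > 96r·√(E(X)) + 128√r + 8·sup(X)·Pr(Ω*), we have Pr(|X − E(X)| > t) ≤ 4·exp(−t²/(8r·(E(X) + t))) + 4·Pr(Ω*). -/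
open MeasureTheory
open scoped Classical

/-- The product of the `n` probability spaces `Ω i`. -/
noncomputable def prodMeasure {n : ℕ} (Ω : Fin n → Type) [∀ i, MeasureSpace (Ω i)] :
    Measure (∀ i, Ω i) :=
  Measure.pi fun i => (volume : Measure (Ω i))

/-!
Talagrand's weak transport inequality, proved by induction on the number of coordinates, bounds
`(𝔼 x, exp (weakInfConv g x)) * 𝔼 x, exp (-g x)` by `1`, where `weakInfConv g x` is the least cost
of moving `x` to a random point `y`, namely the mean of `g y` plus a quarter of the sum over `i` of
`Pr (y i ≠ x i) ^ 2`. A certificate at `x`, combined with `l * b * p ≤ p ^ 2 / 4 + l ^ 2 * b ^ 2`,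
gives `(l - l ^ 2 * r) * X x ≤ weakInfConv (l * X) x`, hence
`mgf X (l - l ^ 2 * r) * mgf X (-l) ≤ 1`. Jensen's inequality in one factor and Markov's inequality
in the other yield both tails.

Since `weakInfConv g` need not be measurable on a general product space, the transport inequality is
only used on finite grids: sample `N + 1` values of each coordinate independently and apply it to
the restriction of `X` to the resulting grid. All but a vanishing proportion of the pairs of grid
points share no sampled value, so they are independent, and the moment bound follows as `N → ∞`.
-/

open Real Set Filter Topology ProbabilityTheory
open scoped BigOperators ENNReal

section Exponential

lemma exp_sub_sq_add_exp_neg_le_two {d : ℝ} (hd₀ : 0 ≤ d) (hd : d ≤ 1 / 2) :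
    exp (d - d ^ 2) + exp (-d) ≤ 2 := by
  have exp_le_cubic {x : ℝ} (hx : |x| ≤ 1) : exp x ≤ 1 + x + x ^ 2 / 2 + 2 / 9 * |x| ^ 3 := by
    have h := (abs_le.1 (Real.exp_bound hx (n := 3) (by norm_num))).2
    norm_num [Finset.sum_range_succ, Nat.factorial] at h
    linarith
  have hu₀ : 0 ≤ d - d ^ 2 := by nlinarith
  have hu : (d - d ^ 2) ^ 3 ≤ d ^ 3 := pow_le_pow_left₀ hu₀ (by nlinarith) 3
  have h₁ := exp_le_cubic (x := d - d ^ 2) (abs_le.2 ⟨by linarith, by nlinarith⟩)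
  have h₂ := exp_le_cubic (x := -d) (abs_le.2 ⟨by linarith, by linarith⟩)
  rw [abs_of_nonneg hu₀] at h₁
  rw [abs_neg, abs_of_nonneg hd₀] at h₂
  nlinarith [mul_nonneg (pow_nonneg hd₀ 3) (sub_nonneg.2 hd)]

-- The exponent is minimised over `s` at `s = 2 * d`, which is admissible when `d ≤ 1 / 2`.
lemma exists_exp_sq_div_four_add_le_two_sub_exp_neg {d : ℝ} (hd₀ : 0 ≤ d) :
    ∃ s ∈ Icc (0 : ℝ) 1, exp (s ^ 2 / 4 + (1 - s) * d) ≤ 2 - exp (-d) := by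
  rcases le_total d (1 / 2) with hd | hd
  · refine ⟨2 * d, ⟨by linarith, by linarith⟩, ?_⟩
    rw [show (2 * d) ^ 2 / 4 + (1 - 2 * d) * d = d - d ^ 2 by ring]
    linarith [exp_sub_sq_add_exp_neg_le_two hd₀ hd]
  · refine ⟨1, ⟨zero_le_one, le_rfl⟩, ?_⟩
    have h := exp_sub_sq_add_exp_neg_le_two (d := 1 / 2) (by norm_num) le_rfl
    have h_anti : exp (-d) ≤ exp (-(1 / 2)) := exp_le_exp.2 (neg_le_neg hd)
    rw [show (1 / 2 : ℝ) - (1 / 2) ^ 2 = 1 / 4 by norm_num] at h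
    rw [show (1 : ℝ) ^ 2 / 4 + (1 - 1) * d = 1 / 4 by ring]
    linarith

variable {B : Type*} [Fintype B] {f F₁ F₂ : B → ℝ}

lemma expect_exp_convexComb_le {u v s : ℝ} (hs : s ∈ Icc (0 : ℝ) 1)
    (h₁ : 𝔼 x, exp (F₁ x) ≤ exp u) (h₂ : 𝔼 x, exp (F₂ x) ≤ exp v) :
    𝔼 x, exp ((1 - s) * F₁ x + s * F₂ x) ≤ exp ((1 - s) * u + s * v) := by
  have h_convex (x : B) : exp ((1 - s) * F₁ x + s * F₂ x) ≤ exp ((1 - s) * u + s * v) *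
      ((1 - s) * (exp (F₁ x) / exp u) + s * (exp (F₂ x) / exp v)) := by
    have h := convexOn_exp.2 (mem_univ (F₁ x - u)) (mem_univ (F₂ x - v))
      (sub_nonneg.2 hs.2) hs.1 (by ring)
    simp only [smul_eq_mul, exp_sub] at h
    calc exp ((1 - s) * F₁ x + s * F₂ x)
        = exp ((1 - s) * u + s * v) * exp ((1 - s) * (F₁ x - u) + s * (F₂ x - v)) := by
          rw [← exp_add]; ring_nf
      _ ≤ _ := by gcongr
  calc 𝔼 x, exp ((1 - s) * F₁ x + s * F₂ x)
      ≤ exp ((1 - s) * u + s * v) *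
          ((1 - s) * ((𝔼 x, exp (F₁ x)) / exp u) + s * ((𝔼 x, exp (F₂ x)) / exp v)) := by
        refine (Finset.expect_le_expect fun x _ => h_convex x).trans_eq ?_
        simp only [← Finset.mul_expect, Finset.expect_add_distrib, ← Finset.expect_div]
    _ ≤ exp ((1 - s) * u + s * v) * ((1 - s) * 1 + s * 1) := by
        have := hs.1
        have := sub_nonneg.2 hs.2
        gcongr
        exacts [(div_le_one (exp_pos u)).2 h₁, (div_le_one (exp_pos v)).2 h₂]
    _ = exp ((1 - s) * u + s * v) := by ring

lemma expect_exp_le_of_forall_le_convexComb {U V : ℝ} (hU : 0 < U) (hUV : U ≤ V)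
    (h₁ : (𝔼 x, exp (F₁ x)) * U ≤ 1) (h₂ : (𝔼 x, exp (F₂ x)) * V ≤ 1)
    (hf : ∀ s ∈ Icc (0 : ℝ) 1, ∀ x, f x ≤ (1 - s) * F₁ x + s * F₂ x + s ^ 2 / 4) :
    𝔼 x, exp (f x) ≤ (2 - U / V) / V := by
  have hV : 0 < V := hU.trans_le hUV
  obtain ⟨s, hs, h_exp⟩ :=
    exists_exp_sq_div_four_add_le_two_sub_exp_neg (sub_nonneg.2 (log_le_log hU hUV))
  have h₁' : 𝔼 x, exp (F₁ x) ≤ exp (-log U) := by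
    rwa [exp_neg, exp_log hU, ← one_div, le_div_iff₀ hU]
  have h₂' : 𝔼 x, exp (F₂ x) ≤ exp (-log V) := by
    rwa [exp_neg, exp_log hV, ← one_div, le_div_iff₀ hV]
  calc 𝔼 x, exp (f x)
      ≤ 𝔼 x, exp (s ^ 2 / 4) * exp ((1 - s) * F₁ x + s * F₂ x) := by
        refine Finset.expect_le_expect fun x _ => ?_
        rw [← exp_add, exp_le_exp]
        linarith [hf s hs x]
    _ ≤ exp (s ^ 2 / 4) * exp ((1 - s) * -log U + s * -log V) := by
        rw [← Finset.mul_expect]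
        gcongr
        exact expect_exp_convexComb_le hs h₁' h₂'
    _ = exp (s ^ 2 / 4 + (1 - s) * (log V - log U)) * exp (-log V) := by
        rw [← exp_add, ← exp_add]; ring_nf
    _ ≤ (2 - exp (-(log V - log U))) * exp (-log V) := by gcongr
    _ = (2 - U / V) / V := by
        rw [neg_sub, exp_sub, exp_neg, exp_log hU, exp_log hV, ← div_eq_mul_inv]

end Exponential

section WeakTransport

variable {A : Type*} [Fintype A] {n : ℕ}

/-- The mass that the weights `ν` give to the points differing from `x` in coordinate `i`. -/
noncomputable def mismatch (ν : (Fin n → A) → ℝ) (x : Fin n → A) (i : Fin n) : ℝ :=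
  ν ⬝ᵥ fun y => if x i = y i then 0 else 1

/-- The cost, in Talagrand's weak transport problem, of sending the point `x` to the distribution
`ν` when arriving at `y` costs `g y`. Both `ν` and `g` are encoded as vectors indexed by points. -/
noncomputable def weakTransportCost (g : (Fin n → A) → ℝ) (x : Fin n → A)
    (ν : (Fin n → A) → ℝ) : ℝ :=
  ν ⬝ᵥ g + (∑ i, mismatch ν x i ^ 2) / 4

/-- The infimum convolution of `g` with the weak transport cost: the least cost of sending `x` to
a probability distribution. -/
noncomputable def weakInfConv (g : (Fin n → A) → ℝ) (x : Fin n → A) : ℝ :=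
  sInf (weakTransportCost g x '' stdSimplex ℝ (Fin n → A))

lemma continuous_weakTransportCost (g : (Fin n → A) → ℝ) (x : Fin n → A) :
    Continuous (weakTransportCost g x) := by
  unfold weakTransportCost mismatch dotProduct
  fun_prop

lemma exists_weakTransportCost_eq_weakInfConv (g : (Fin n → A) → ℝ) (x : Fin n → A) :
    ∃ ν ∈ stdSimplex ℝ (Fin n → A), weakTransportCost g x ν = weakInfConv g x := by
  obtain ⟨ν, hν, h⟩ := (isCompact_stdSimplex ℝ (Fin n → A)).exists_sInf_image_eq
    ⟨_, single_mem_stdSimplex ℝ x⟩ (continuous_weakTransportCost g x).continuousOn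
  exact ⟨ν, hν, h.symm⟩

lemma weakInfConv_le {g : (Fin n → A) → ℝ} {x : Fin n → A} {ν : (Fin n → A) → ℝ}
    (hν : ν ∈ stdSimplex ℝ (Fin n → A)) : weakInfConv g x ≤ weakTransportCost g x ν :=
  csInf_le ((isCompact_stdSimplex ℝ _).bddBelow_image
    (continuous_weakTransportCost g x).continuousOn) (mem_image_of_mem _ hν)

lemma mismatch_nonneg {ν : (Fin n → A) → ℝ} (hν : ν ∈ stdSimplex ℝ (Fin n → A))
    (x : Fin n → A) (i : Fin n) : 0 ≤ mismatch ν x i :=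
  dotProduct_nonneg_of_nonneg hν.1 fun y => by positivity

lemma mismatch_le_one {ν : (Fin n → A) → ℝ} (hν : ν ∈ stdSimplex ℝ (Fin n → A))
    (x : Fin n → A) (i : Fin n) : mismatch ν x i ≤ 1 := by
  rw [← hν.2, ← dotProduct_one]
  refine dotProduct_le_dotProduct_of_nonneg_left (fun y => ?_) hν.1
  dsimp only
  split_ifs <;> simp

lemma linearMap_funOnFinite_dotProduct {B C : Type*} [Fintype B] [Fintype C] (φ : B → C)
    (ν : B → ℝ) (g : C → ℝ) :
    FunOnFinite.linearMap ℝ ℝ φ ν ⬝ᵥ g = ν ⬝ᵥ (g ∘ φ) := by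
  simp only [dotProduct, FunOnFinite.linearMap_apply_apply, Finset.sum_mul]
  rw [← Finset.sum_fiberwise Finset.univ φ]
  refine Finset.sum_congr rfl fun c _ => Finset.sum_congr rfl fun b hb => ?_
  rw [Function.comp_apply, (Finset.mem_filter.1 hb).2]

/-- The image of `ν` under `y ↦ (σ y, y)`: a first coordinate is prepended to a `ν`-distributed
point. -/
noncomputable def consMap (σ : (Fin n → A) → A) (ν : (Fin n → A) → ℝ) : (Fin (n + 1) → A) → ℝ :=
  FunOnFinite.linearMap ℝ ℝ (fun y => Fin.cons (σ y) y) ν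

lemma consMap_mem_stdSimplex (σ : (Fin n → A) → A) {ν : (Fin n → A) → ℝ}
    (hν : ν ∈ stdSimplex ℝ (Fin n → A)) : consMap σ ν ∈ stdSimplex ℝ (Fin (n + 1) → A) :=
  stdSimplex.image_linearMap _ (mem_image_of_mem _ hν)

lemma consMap_dotProduct (σ : (Fin n → A) → A) (ν : (Fin n → A) → ℝ)
    (g : (Fin (n + 1) → A) → ℝ) :
    consMap σ ν ⬝ᵥ g = ν ⬝ᵥ fun y => g (Fin.cons (σ y) y) :=
  linearMap_funOnFinite_dotProduct _ ν g

lemma mismatch_consMap_succ (σ : (Fin n → A) → A) (ν : (Fin n → A) → ℝ) (a : A) (x : Fin n → A)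
    (i : Fin n) : mismatch (consMap σ ν) (Fin.cons a x) i.succ = mismatch ν x i := by
  simp only [mismatch, consMap_dotProduct, Fin.cons_succ]

lemma mismatch_consMap_const_zero (ν : (Fin n → A) → ℝ) (a : A) (x : Fin n → A) :
    mismatch (consMap (fun _ => a) ν) (Fin.cons a x) 0 = 0 := by
  simp only [mismatch, consMap_dotProduct, Fin.cons_zero, if_true]
  exact dotProduct_zero ν

lemma mismatch_convexComb (ν₁ ν₂ : (Fin n → A) → ℝ) (s : ℝ) (x : Fin n → A) (i : Fin n) :
    mismatch ((1 - s) • ν₁ + s • ν₂) x i = (1 - s) * mismatch ν₁ x i + s * mismatch ν₂ x i := by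
  simp only [mismatch, add_dotProduct, smul_dotProduct, smul_eq_mul]

-- Mixing costs only `s ^ 2 / 4` beyond convexity, because `consMap (fun _ => a) ν₁` never disagrees
-- with `Fin.cons a x` in the first coordinate.
lemma weakTransportCost_cons_le (g : (Fin (n + 1) → A) → ℝ) (a : A) (σ : (Fin n → A) → A)
    (x : Fin n → A) (ν₁ : (Fin n → A) → ℝ) {ν₂ : (Fin n → A) → ℝ}
    (hν₂ : ν₂ ∈ stdSimplex ℝ (Fin n → A)) {s : ℝ} (hs : s ∈ Icc (0 : ℝ) 1) :
    weakTransportCost g (Fin.cons a x) ((1 - s) • consMap (fun _ => a) ν₁ + s • consMap σ ν₂) ≤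
      (1 - s) * weakTransportCost (fun y => g (Fin.cons a y)) x ν₁ +
        s * weakTransportCost (fun y => g (Fin.cons (σ y) y)) x ν₂ + s ^ 2 / 4 := by
  have h_first : (s * mismatch (consMap σ ν₂) (Fin.cons a x) 0) ^ 2 ≤ s ^ 2 := by
    have hν := consMap_mem_stdSimplex σ hν₂
    exact pow_le_pow_left₀ (mul_nonneg hs.1 (mismatch_nonneg hν _ 0))
      (mul_le_of_le_one_right hs.1 (mismatch_le_one hν _ 0)) 2
  have h_rest : ∑ i, ((1 - s) * mismatch ν₁ x i + s * mismatch ν₂ x i) ^ 2 ≤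
      (1 - s) * ∑ i, mismatch ν₁ x i ^ 2 + s * ∑ i, mismatch ν₂ x i ^ 2 := by
    rw [Finset.mul_sum, Finset.mul_sum, ← Finset.sum_add_distrib]
    exact Finset.sum_le_sum fun i _ => even_two.convexOn_pow.2 (mem_univ _) (mem_univ _)
      (sub_nonneg.2 hs.2) hs.1 (sub_add_cancel 1 s)
  simp only [weakTransportCost, Fin.sum_univ_succ, mismatch_convexComb, mismatch_consMap_succ,
    mismatch_consMap_const_zero, add_dotProduct, smul_dotProduct, consMap_dotProduct, smul_eq_mul,
    mul_zero, zero_add]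
  linarith

lemma weakInfConv_cons_le (g : (Fin (n + 1) → A) → ℝ) (a : A) (σ : (Fin n → A) → A)
    (x : Fin n → A) {s : ℝ} (hs : s ∈ Icc (0 : ℝ) 1) :
    weakInfConv g (Fin.cons a x) ≤
      (1 - s) * weakInfConv (fun y => g (Fin.cons a y)) x +
        s * weakInfConv (fun y => g (Fin.cons (σ y) y)) x + s ^ 2 / 4 := by
  obtain ⟨ν₁, hν₁, h₁⟩ := exists_weakTransportCost_eq_weakInfConv (fun y => g (Fin.cons a y)) x
  obtain ⟨ν₂, hν₂, h₂⟩ :=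
    exists_weakTransportCost_eq_weakInfConv (fun y => g (Fin.cons (σ y) y)) x
  rw [← h₁, ← h₂]
  refine (weakInfConv_le ?_).trans (weakTransportCost_cons_le g a σ x ν₁ hν₂ hs)
  exact convex_stdSimplex ℝ _ (consMap_mem_stdSimplex _ hν₁) (consMap_mem_stdSimplex σ hν₂)
    (sub_nonneg.2 hs.2) hs.1 (sub_add_cancel 1 s)

lemma expect_cons (h : (Fin (n + 1) → A) → ℝ) :
    𝔼 y, h y = 𝔼 a, 𝔼 x : Fin n → A, h (Fin.cons a x) := by
  rw [← Finset.expect_product', Finset.univ_product_univ]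
  exact (Fintype.expect_equiv (Fin.consEquiv fun _ => A) _ _ fun _ => rfl).symm

theorem expect_exp_weakInfConv_mul_expect_exp_neg_le_one [Nonempty A] (g : (Fin n → A) → ℝ) :
    (𝔼 x, exp (weakInfConv g x)) * 𝔼 x, exp (-g x) ≤ 1 := by
  induction n with
  | zero =>
    have h : weakInfConv g default ≤ g default := by
      refine (weakInfConv_le (single_mem_stdSimplex ℝ default)).trans_eq ?_
      simp [weakTransportCost]
    simpa [← exp_add, Finset.univ_unique] using h
  | succ n ih =>
    choose σ hσ using fun y : Fin n → A => Finite.exists_min fun a => g (Fin.cons a y)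
    set U : A → ℝ := fun a => 𝔼 x : Fin n → A, exp (-g (Fin.cons a x))
    set V : ℝ := 𝔼 x, exp (-g (Fin.cons (σ x) x))
    have hU (a : A) : 0 < U a := Finset.expect_pos (fun _ _ => exp_pos _) Finset.univ_nonempty
    have hV : 0 < V := Finset.expect_pos (fun _ _ => exp_pos _) Finset.univ_nonempty
    have hUV (a : A) : U a ≤ V :=
      Finset.expect_le_expect fun x _ => exp_le_exp.2 (neg_le_neg (hσ x a))
    have h_fiber (a : A) : 𝔼 x, exp (weakInfConv g (Fin.cons a x)) ≤ (2 - U a / V) / V :=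
      expect_exp_le_of_forall_le_convexComb (hU a) (hUV a) (ih _) (ih _)
        fun s hs x => weakInfConv_cons_le g a σ x hs
    rw [expect_cons, expect_cons fun y => exp (-g y)]
    change _ * 𝔼 a, U a ≤ 1
    calc (𝔼 a, 𝔼 x, exp (weakInfConv g (Fin.cons a x))) * 𝔼 a, U a
        ≤ (𝔼 a, (2 - U a / V) / V) * 𝔼 a, U a := by
          gcongr with a
          exact h_fiber a
      _ = (2 - (𝔼 a, U a) / V) * ((𝔼 a, U a) / V) := by
          rw [← Finset.expect_div, Finset.expect_sub_distrib, Fintype.expect_const,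
            ← Finset.expect_div]
          ring
      _ ≤ 1 := by nlinarith [sq_nonneg ((𝔼 a, U a) / V - 1)]

end WeakTransport

section Certificate

variable {ι : Type*} [Fintype ι] {Ω : ι → Type*}

/-- Talagrand's certifiability condition: every point `x` carries nonnegative weights with sum of
squares at most `r * X x`, such that changing some of the coordinates of `x` lowers `X` by at most
the total weight of those coordinates. -/
def IsCertifiable (r : ℝ) (X : (∀ i, Ω i) → ℝ) : Prop :=
  ∀ x, ∃ b : ι → ℝ, (∀ i, 0 ≤ b i) ∧ ∑ i, b i ^ 2 ≤ r * X x ∧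
    ∀ y, X x - ∑ i ∈ Finset.univ.filter (fun i => x i ≠ y i), b i ≤ X y

variable {r l : ℝ} {X : (∀ i, Ω i) → ℝ}

lemma IsCertifiable.nonneg (hX : IsCertifiable r X) (hr : 0 < r) (x : ∀ i, Ω i) : 0 ≤ X x := by
  obtain ⟨b, -, h_sq, -⟩ := hX x
  exact nonneg_of_mul_nonneg_right ((Finset.sum_nonneg fun i _ => sq_nonneg (b i)).trans h_sq) hr

lemma IsCertifiable.comp_map {J : ι → Type*} (hX : IsCertifiable r X) (s : ∀ i, J i → Ω i) :
    IsCertifiable r fun j : ∀ i, J i => X fun i => s i (j i) := by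
  intro j
  obtain ⟨b, hb, h_sq, h_le⟩ := hX fun i => s i (j i)
  refine ⟨b, hb, h_sq, fun k => (sub_le_sub_left ?_ _).trans (h_le fun i => s i (k i))⟩
  refine Finset.sum_le_sum_of_subset_of_nonneg (fun i hi => ?_) fun i _ _ => hb i
  simp only [Finset.mem_filter_univ] at hi ⊢
  exact fun h => hi (by rw [h])

variable {A : Type*} [Fintype A] {n : ℕ}

lemma sum_mul_mismatch (b : Fin n → ℝ) (ν : (Fin n → A) → ℝ) (x : Fin n → A) :
    ∑ i, b i * mismatch ν x i =
      ν ⬝ᵥ fun y => ∑ i ∈ Finset.univ.filter (fun i => x i ≠ y i), b i := by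
  simp only [mismatch, dotProduct, Finset.mul_sum, Finset.sum_filter]
  rw [Finset.sum_comm]
  refine Finset.sum_congr rfl fun y _ => Finset.sum_congr rfl fun i _ => ?_
  by_cases h : x i = y i
  · simp [h]
  · simp [h, mul_comm]

lemma IsCertifiable.le_weakInfConv {Y : (Fin n → A) → ℝ} (hY : IsCertifiable r Y) (hl : 0 ≤ l)
    (x : Fin n → A) : (l - l ^ 2 * r) * Y x ≤ weakInfConv (fun y => l * Y y) x := by
  obtain ⟨ν, hν, h_eq⟩ := exists_weakTransportCost_eq_weakInfConv (fun y => l * Y y) x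
  obtain ⟨b, -, h_sq, h_le⟩ := hY x
  have h_cert : Y x - ∑ i, b i * mismatch ν x i ≤ ν ⬝ᵥ Y := by
    have h_const : ν ⬝ᵥ (fun _ => Y x) = Y x := by
      simp only [dotProduct, ← Finset.sum_mul, hν.2, one_mul]
    rw [← h_const, sum_mul_mismatch, ← dotProduct_sub]
    exact dotProduct_le_dotProduct_of_nonneg_left h_le hν.1
  have h_amgm : l * ∑ i, b i * mismatch ν x i ≤
      (∑ i, mismatch ν x i ^ 2) / 4 + l ^ 2 * ∑ i, b i ^ 2 := by
    rw [Finset.mul_sum, Finset.mul_sum, Finset.sum_div, ← Finset.sum_add_distrib]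
    exact Finset.sum_le_sum fun i _ => by nlinarith [sq_nonneg (mismatch ν x i / 2 - l * b i)]
  have h_smul : ν ⬝ᵥ (fun y => l * Y y) = l * (ν ⬝ᵥ Y) := dotProduct_smul l ν Y
  rw [← h_eq, weakTransportCost, h_smul]
  nlinarith [mul_le_mul_of_nonneg_left h_sq (sq_nonneg l), mul_le_mul_of_nonneg_left h_cert hl]

lemma IsCertifiable.expect_exp_mul_expect_exp_neg_le_one [Nonempty A] {Y : (Fin n → A) → ℝ}
    (hY : IsCertifiable r Y) (hl : 0 ≤ l) :
    (𝔼 x, exp ((l - l ^ 2 * r) * Y x)) * 𝔼 x, exp (-l * Y x) ≤ 1 := by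
  refine le_trans ?_ (expect_exp_weakInfConv_mul_expect_exp_neg_le_one fun x => l * Y x)
  simp only [neg_mul]
  gcongr with x
  exact hY.le_weakInfConv hl x

end Certificate

section Sampling

variable {ι : Type*} {Ω : ι → Type*} {N : ℕ}

/-- Given `N` samples of every coordinate, the point whose coordinate `i` is the sample number
`j i`. -/
def gridPoint (s : ∀ p : ι × Fin N, Ω p.1) (j : ι → Fin N) : ∀ i, Ω i :=
  fun i => s (i, j i)

variable [∀ i, MeasurableSpace (Ω i)]

lemma measurable_gridPoint (j : ι → Fin N) :
    Measurable fun s : ∀ p : ι × Fin N, Ω p.1 => gridPoint s j := by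
  unfold gridPoint
  fun_prop

variable [Fintype ι] (μ : ∀ i, Measure (Ω i)) [∀ i, IsProbabilityMeasure (μ i)]

lemma measurePreserving_pi_comp {κ : Type*} [Fintype κ] {e : κ → ι} (he : e.Injective) :
    MeasurePreserving (fun (s : ∀ i, Ω i) k => s (e k)) (Measure.pi μ)
      (Measure.pi fun k => μ (e k)) := by
  refine ⟨by fun_prop, ?_⟩
  rw [← Measure.infinitePi_eq_pi, ← Measure.infinitePi_eq_pi]
  exact Measure.map_infinitePi_infinitePi_of_inj he

lemma measurePreserving_gridPoint_prodMk {j k : ι → Fin N} (hjk : ∀ i, j i ≠ k i) :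
    MeasurePreserving (fun s : ∀ p : ι × Fin N, Ω p.1 => (gridPoint s j, gridPoint s k))
      (Measure.pi fun p : ι × Fin N => μ p.1) ((Measure.pi μ).prod (Measure.pi μ)) := by
  let e : ι ⊕ ι → ι × Fin N := Sum.elim (fun i => (i, j i)) (fun i => (i, k i))
  have he : e.Injective :=
    Function.Injective.sumElim (fun _ _ h => congrArg Prod.fst h)
      (fun _ _ h => congrArg Prod.fst h) fun a b h => by
        obtain ⟨rfl, h⟩ := Prod.mk.inj h
        exact hjk a h
  exact (measurePreserving_sumPiEquivProdPi (X := fun q => Ω (e q).1) fun q => μ (e q).1).comp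
    (measurePreserving_pi_comp (fun p : ι × Fin N => μ p.1) he)

variable {F G : (∀ i, Ω i) → ℝ≥0∞}

lemma lintegral_gridPoint_mul_gridPoint (hF : Measurable F) (hG : Measurable G)
    {j k : ι → Fin N} (hjk : ∀ i, j i ≠ k i) :
    ∫⁻ s, F (gridPoint s j) * G (gridPoint s k) ∂(Measure.pi fun p : ι × Fin N => μ p.1) =
      (∫⁻ x, F x ∂(Measure.pi μ)) * ∫⁻ x, G x ∂(Measure.pi μ) := by
  rw [← lintegral_prod_mul hF.aemeasurable hG.aemeasurable]
  exact (measurePreserving_gridPoint_prodMk μ hjk).lintegral_comp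
    (f := fun z => F z.1 * G z.2) (by fun_prop)

variable [DecidableEq ι]

-- Of the `(N + 1) ^ d` grid points, `N ^ d` share no sample with a given one.
lemma pow_mul_lintegral_le_sum_lintegral_gridPoint (hF : Measurable F) (hG : Measurable G)
    (j : ι → Fin (N + 1)) :
    (N : ℝ≥0∞) ^ Fintype.card ι * ((∫⁻ x, F x ∂(Measure.pi μ)) * ∫⁻ x, G x ∂(Measure.pi μ)) ≤
      ∑ k, ∫⁻ s, F (gridPoint s j) * G (gridPoint s k)
        ∂(Measure.pi fun p : ι × Fin (N + 1) => μ p.1) := by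
  let D : Finset (ι → Fin (N + 1)) := Fintype.piFinset fun i => {j i}ᶜ
  have hD : D.card = N ^ Fintype.card ι := by
    simp [D, Fintype.card_piFinset, Finset.card_compl]
  calc (N : ℝ≥0∞) ^ Fintype.card ι * ((∫⁻ x, F x ∂(Measure.pi μ)) * ∫⁻ x, G x ∂(Measure.pi μ))
      = ∑ k ∈ D, ∫⁻ s, F (gridPoint s j) * G (gridPoint s k)
          ∂(Measure.pi fun p : ι × Fin (N + 1) => μ p.1) := by
        rw [← Nat.cast_pow, ← hD, ← nsmul_eq_mul, ← Finset.sum_const]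
        refine Finset.sum_congr rfl fun k hk => ?_
        rw [lintegral_gridPoint_mul_gridPoint μ hF hG fun i h => ?_]
        simpa [h] using Fintype.mem_piFinset.1 hk i
    _ ≤ _ := Finset.sum_le_sum_of_subset (Finset.subset_univ D)

lemma pow_mul_lintegral_mul_lintegral_le (hF : Measurable F) (hG : Measurable G)
    (h : ∀ s : ∀ p : ι × Fin (N + 1), Ω p.1,
      (∑ j, F (gridPoint s j)) * ∑ k, G (gridPoint s k) ≤
        (((N : ℝ≥0∞) + 1) ^ Fintype.card ι) ^ 2) :
    (N : ℝ≥0∞) ^ Fintype.card ι * ((∫⁻ x, F x ∂(Measure.pi μ)) * ∫⁻ x, G x ∂(Measure.pi μ)) ≤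
      ((N : ℝ≥0∞) + 1) ^ Fintype.card ι := by
  set d := Fintype.card ι
  set I := (∫⁻ x, F x ∂(Measure.pi μ)) * ∫⁻ x, G x ∂(Measure.pi μ)
  set ρ := Measure.pi fun p : ι × Fin (N + 1) => μ p.1
  have h_meas (j k : ι → Fin (N + 1)) : Measurable fun s : ∀ p : ι × Fin (N + 1), Ω p.1 =>
      F (gridPoint s j) * G (gridPoint s k) :=
    (hF.comp (measurable_gridPoint j)).mul (hG.comp (measurable_gridPoint k))
  have h_pow : ((N : ℝ≥0∞) + 1) ^ d * (N ^ d * I) ≤ (((N : ℝ≥0∞) + 1) ^ d) * (N + 1) ^ d := calc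
    ((N : ℝ≥0∞) + 1) ^ d * (N ^ d * I) = ∑ _j : ι → Fin (N + 1), N ^ d * I := by
        simp [d, Finset.card_univ]
    _ ≤ ∑ j, ∑ k, ∫⁻ s, F (gridPoint s j) * G (gridPoint s k) ∂ρ :=
        Finset.sum_le_sum fun j _ => pow_mul_lintegral_le_sum_lintegral_gridPoint μ hF hG j
    _ = ∫⁻ s, (∑ j, F (gridPoint s j)) * ∑ k, G (gridPoint s k) ∂ρ := by
        simp_rw [Finset.sum_mul_sum]
        rw [lintegral_finsetSum _ fun j _ => Finset.measurable_sum _ fun k _ => h_meas j k]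
        exact Finset.sum_congr rfl fun j _ => (lintegral_finsetSum _ fun k _ => h_meas j k).symm
    _ ≤ ((N : ℝ≥0∞) + 1) ^ d * (N + 1) ^ d := by
        refine (lintegral_mono h).trans_eq ?_
        rw [lintegral_const, measure_univ, mul_one, sq]
  exact (ENNReal.mul_le_mul_iff_right (by simp) (by finiteness)).1 h_pow

lemma le_one_of_forall_pow_mul_le {d : ℕ} {I : ℝ≥0∞}
    (h : ∀ N : ℕ, (N : ℝ≥0∞) ^ d * I ≤ ((N : ℝ≥0∞) + 1) ^ d) : I ≤ 1 := by
  have h_ratio (N : ℕ) : ENNReal.ofReal (N / (N + 1)) = (N : ℝ≥0∞) / (N + 1) := by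
    rw [ENNReal.ofReal_div_of_pos (by positivity), ENNReal.ofReal_natCast,
      ENNReal.ofReal_add N.cast_nonneg zero_le_one, ENNReal.ofReal_natCast, ENNReal.ofReal_one]
  have h_lim : Tendsto (fun N : ℕ => ENNReal.ofReal (N / (N + 1)) ^ d * I) atTop (𝓝 I) := by
    have h_one := ENNReal.tendsto_ofReal (tendsto_natCast_div_add_atTop (1 : ℝ))
    simpa using ENNReal.Tendsto.mul_const (ENNReal.Tendsto.pow (n := d) h_one)
      (Or.inl (by simp))
  refine le_of_tendsto' h_lim fun N => ?_
  rw [h_ratio, ENNReal.div_eq_inv_mul, mul_pow, mul_assoc, ← ENNReal.inv_pow,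
    ← ENNReal.div_eq_inv_mul]
  exact ENNReal.div_le_of_le_mul ((h N).trans_eq (one_mul _).symm)

theorem lintegral_mul_lintegral_le_one_of_gridPoint (hF : Measurable F) (hG : Measurable G)
    (h : ∀ (N : ℕ) (s : ∀ p : ι × Fin (N + 1), Ω p.1),
      (∑ j, F (gridPoint s j)) * ∑ k, G (gridPoint s k) ≤
        (((N : ℝ≥0∞) + 1) ^ Fintype.card ι) ^ 2) :
    (∫⁻ x, F x ∂(Measure.pi μ)) * ∫⁻ x, G x ∂(Measure.pi μ) ≤ 1 :=
  le_one_of_forall_pow_mul_le fun N =>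
    pow_mul_lintegral_mul_lintegral_le μ hF hG (h N)

end Sampling

section ExponentialMoments

variable {n : ℕ} {Ω : Fin n → Type*} {r l : ℝ} {X : (∀ i, Ω i) → ℝ}

lemma IsCertifiable.sum_exp_gridPoint_mul_le (hX : IsCertifiable r X) (hl : 0 ≤ l) {N : ℕ}
    (s : ∀ p : Fin n × Fin (N + 1), Ω p.1) :
    (∑ j, ENNReal.ofReal (exp ((l - l ^ 2 * r) * X (gridPoint s j)))) *
      ∑ k, ENNReal.ofReal (exp (-l * X (gridPoint s k))) ≤
        (((N : ℝ≥0∞) + 1) ^ Fintype.card (Fin n)) ^ 2 := by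
  have h := (hX.comp_map fun i k => s (i, k)).expect_exp_mul_expect_exp_neg_le_one hl
  rw [Fintype.expect_eq_sum_div_card, Fintype.expect_eq_sum_div_card, div_mul_div_comm,
    div_le_one (by positivity), ← sq, Fintype.card_fun, Fintype.card_fin] at h
  rw [← ENNReal.ofReal_sum_of_nonneg fun _ _ => (exp_pos _).le,
    ← ENNReal.ofReal_sum_of_nonneg fun _ _ => (exp_pos _).le,
    ← ENNReal.ofReal_mul (Finset.sum_nonneg fun _ _ => (exp_pos _).le)]
  refine (ENNReal.ofReal_le_ofReal h).trans_eq ?_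
  rw [ENNReal.ofReal_pow (by positivity), ENNReal.ofReal_natCast]
  simp

variable [∀ i, MeasurableSpace (Ω i)] (μ : ∀ i, Measure (Ω i)) [∀ i, IsProbabilityMeasure (μ i)]

lemma IsCertifiable.lintegral_exp_mul_lintegral_exp_neg_le_one (hX : IsCertifiable r X)
    (hXm : Measurable X) (hl : 0 ≤ l) :
    (∫⁻ x, ENNReal.ofReal (exp ((l - l ^ 2 * r) * X x)) ∂(Measure.pi μ)) *
      ∫⁻ x, ENNReal.ofReal (exp (-l * X x)) ∂(Measure.pi μ) ≤ 1 :=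
  lintegral_mul_lintegral_le_one_of_gridPoint μ (by fun_prop) (by fun_prop)
    fun _ s => hX.sum_exp_gridPoint_mul_le hl s

lemma IsCertifiable.integrable_exp_neg (hX : IsCertifiable r X) (hXm : Measurable X) (hr : 0 < r)
    (hl : 0 ≤ l) : Integrable (fun x => exp (-l * X x)) (Measure.pi μ) := by
  refine Integrable.of_bound (by fun_prop) 1 (.of_forall fun x => ?_)
  rw [norm_of_nonneg (exp_pos _).le, exp_le_one_iff, neg_mul, neg_nonpos]
  exact mul_nonneg hl (hX.nonneg hr x)

lemma lintegral_ofReal_exp_eq_ofReal_mgf {α : Type*} [MeasurableSpace α] {P : Measure α}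
    {Y : α → ℝ} {c : ℝ} (hc : Integrable (fun x => exp (c * Y x)) P) :
    ∫⁻ x, ENNReal.ofReal (exp (c * Y x)) ∂P = ENNReal.ofReal (mgf Y P c) :=
  (ofReal_integral_eq_lintegral_ofReal hc (.of_forall fun _ => (exp_pos _).le)).symm

lemma IsCertifiable.integrable_exp (hX : IsCertifiable r X) (hXm : Measurable X) (hr : 0 < r)
    (hl : 0 ≤ l) : Integrable (fun x => exp ((l - l ^ 2 * r) * X x)) (Measure.pi μ) := by
  have h_neg := hX.integrable_exp_neg μ hXm hr hl
  have h := hX.lintegral_exp_mul_lintegral_exp_neg_le_one μ hXm hl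
  refine ⟨by fun_prop, (hasFiniteIntegral_iff_ofReal (.of_forall fun x => (exp_pos _).le)).2 ?_⟩
  rw [lintegral_ofReal_exp_eq_ofReal_mgf h_neg] at h
  refine ENNReal.lt_top_of_mul_ne_top_left (h.trans_lt ENNReal.one_lt_top).ne ?_
  exact (ENNReal.ofReal_pos.2 (mgf_pos h_neg)).ne'

lemma IsCertifiable.mgf_mul_mgf_neg_le_one (hX : IsCertifiable r X) (hXm : Measurable X)
    (hr : 0 < r) (hl : 0 ≤ l) :
    mgf X (Measure.pi μ) (l - l ^ 2 * r) * mgf X (Measure.pi μ) (-l) ≤ 1 := by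
  have h := hX.lintegral_exp_mul_lintegral_exp_neg_le_one μ hXm hl
  rw [lintegral_ofReal_exp_eq_ofReal_mgf (hX.integrable_exp μ hXm hr hl),
    lintegral_ofReal_exp_eq_ofReal_mgf (hX.integrable_exp_neg μ hXm hr hl),
    ← ENNReal.ofReal_mul mgf_nonneg] at h
  exact ENNReal.ofReal_le_one.1 h

lemma IsCertifiable.integrable (hX : IsCertifiable r X) (hXm : Measurable X) (hr : 0 < r) :
    Integrable X (Measure.pi μ) := by
  have h_pos := hX.integrable_exp μ hXm hr (l := 1 / (2 * r)) (by positivity)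
  rw [show 1 / (2 * r) - (1 / (2 * r)) ^ 2 * r = 1 / (4 * r) by field_simp; norm_num] at h_pos
  simpa using integrable_pow_of_integrable_exp_mul (by positivity) h_pos
    (hX.integrable_exp_neg μ hXm hr (by positivity)) 1

end ExponentialMoments

section Tails

variable {α : Type*} [MeasurableSpace α] {P : Measure α} [IsProbabilityMeasure P] {X : α → ℝ}

lemma exp_mul_integral_le_mgf {c : ℝ} (hX : Integrable X P)
    (hc : Integrable (fun x => exp (c * X x)) P) : exp (c * ∫ x, X x ∂P) ≤ mgf X P c := by
  rw [← integral_const_mul]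
  exact convexOn_exp.map_integral_le continuousOn_exp isClosed_univ
    (.of_forall fun _ => mem_univ _) (hX.const_mul c) hc

variable {c l : ℝ}

lemma measureReal_ge_le_exp_of_mgf_mul_mgf_neg_le_one (hX : Integrable X P)
    (hc_int : Integrable (fun x => exp (c * X x)) P)
    (hl_int : Integrable (fun x => exp (-l * X x)) P) (hc : 0 ≤ c)
    (h : mgf X P c * mgf X P (-l) ≤ 1) (a : ℝ) :
    P.real {x | a ≤ X x} ≤ exp (l * (∫ x, X x ∂P) - c * a) := by
  have h_mgf : mgf X P c ≤ exp (l * ∫ x, X x ∂P) := by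
    have h_jensen := exp_mul_integral_le_mgf hX hl_int
    rw [neg_mul, exp_neg] at h_jensen
    rw [← le_div_iff₀ (mgf_pos hl_int), one_div] at h
    exact h.trans (inv_le_of_inv_le₀ (exp_pos _) h_jensen)
  calc P.real {x | a ≤ X x} ≤ exp (-c * a) * mgf X P c := measure_ge_le_exp_mul_mgf a hc hc_int
    _ ≤ exp (-c * a) * exp (l * ∫ x, X x ∂P) := by gcongr
    _ = _ := by rw [← exp_add]; ring_nf

lemma measureReal_le_le_exp_of_mgf_mul_mgf_neg_le_one (hX : Integrable X P)
    (hc_int : Integrable (fun x => exp (c * X x)) P)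
    (hl_int : Integrable (fun x => exp (-l * X x)) P) (hl : 0 ≤ l)
    (h : mgf X P c * mgf X P (-l) ≤ 1) (a : ℝ) :
    P.real {x | X x ≤ a} ≤ exp (l * a - c * ∫ x, X x ∂P) := by
  have h_neg : P.real {x | -a ≤ (-X) x} ≤ exp (c * (∫ x, (-X) x ∂P) - l * -a) := by
    refine measureReal_ge_le_exp_of_mgf_mul_mgf_neg_le_one hX.neg ?_ ?_ hl ?_ (-a)
    · simpa using hl_int
    · simpa using hc_int
    · rwa [mgf_neg, mgf_neg, neg_neg, mul_comm]
  simpa [integral_neg, add_comm, sub_eq_add_neg] using h_neg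

lemma measureReal_le_abs_sub_integral_le_of_mgf_mul_mgf_neg_le_one {r t : ℝ} (hX : Integrable X P)
    (hc_int : Integrable (fun x => exp ((l - l ^ 2 * r) * X x)) P)
    (hl_int : Integrable (fun x => exp (-l * X x)) P) (hc : 0 ≤ l - l ^ 2 * r) (hl : 0 ≤ l)
    (hr : 0 ≤ r) (ht : 0 ≤ t) (h : mgf X P (l - l ^ 2 * r) * mgf X P (-l) ≤ 1) :
    P.real {x | t ≤ |X x - ∫ x, X x ∂P|} ≤
      2 * exp (l ^ 2 * r * ((∫ x, X x ∂P) + t) - l * t) := by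
  set E := ∫ x, X x ∂P
  have h_upper : P.real {x | E + t ≤ X x} ≤ exp (l ^ 2 * r * (E + t) - l * t) := by
    refine (measureReal_ge_le_exp_of_mgf_mul_mgf_neg_le_one hX hc_int hl_int hc h (E + t)).trans ?_
    rw [exp_le_exp]
    linarith
  have h_lower : P.real {x | X x ≤ E - t} ≤ exp (l ^ 2 * r * (E + t) - l * t) := by
    refine (measureReal_le_le_exp_of_mgf_mul_mgf_neg_le_one hX hc_int hl_int hl h (E - t)).trans ?_
    have h_slack : 0 ≤ l ^ 2 * r * t := by positivity
    rw [exp_le_exp]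
    linarith
  have h_union : {x | t ≤ |X x - E|} = {x | E + t ≤ X x} ∪ {x | X x ≤ E - t} := by
    ext x
    simp only [mem_ofPred_eq, mem_union, le_abs, neg_sub, le_sub_iff_add_le, add_comm]
  rw [h_union, two_mul]
  exact (measureReal_union_le _ _).trans (add_le_add h_upper h_lower)

end Tails

theorem stmt_10_general {n : ℕ} (Ω : Fin n → Type*) [∀ i, MeasurableSpace (Ω i)]
    (μ : ∀ i, Measure (Ω i)) [∀ i, IsProbabilityMeasure (μ i)]
    {X : (∀ i, Ω i) → ℝ} (hXm : Measurable X) {r : ℝ} (hr : 0 < r) (hX : IsCertifiable r X)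
    {t : ℝ} (ht : 0 < t) :
    (Measure.pi μ).real {x | t ≤ |X x - ∫ x, X x ∂(Measure.pi μ)|} ≤
      2 * exp (-t ^ 2 / (4 * r * ((∫ x, X x ∂(Measure.pi μ)) + t))) := by
  set E := ∫ x, X x ∂(Measure.pi μ)
  have hE : 0 ≤ E := integral_nonneg (hX.nonneg hr)
  -- This choice of `l` minimises the exponent `l ^ 2 * r * (E + t) - l * t`.
  obtain ⟨l, hl_def⟩ : ∃ l, l = t / (2 * r * (E + t)) := ⟨_, rfl⟩
  have hl : 0 ≤ l := by rw [hl_def]; positivity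
  have hc : 0 ≤ l - l ^ 2 * r := by
    have hlr : l * r ≤ 1 := by
      rw [hl_def, div_mul_eq_mul_div, div_le_one (by positivity)]
      nlinarith
    nlinarith
  have h_exponent : l ^ 2 * r * (E + t) - l * t = -t ^ 2 / (4 * r * (E + t)) := by
    rw [hl_def]; field_simp; ring
  rw [← h_exponent]
  exact measureReal_le_abs_sub_integral_le_of_mgf_mul_mgf_neg_le_one (hX.integrable μ hXm hr)
    (hX.integrable_exp μ hXm hr hl) (hX.integrable_exp_neg μ hXm hr hl) hc hl hr.le ht.le
    (hX.mgf_mul_mgf_neg_le_one μ hXm hr hl)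

lemma essSup_nonneg {α : Type*} [MeasurableSpace α] {P : Measure α} [NeZero P] {X : α → ℝ}
    (hX : ∀ x, 0 ≤ X x) : 0 ≤ essSup X P := by
  rw [essSup, limsup_eq]
  refine Real.sInf_nonneg fun a (ha : ∀ᵐ x ∂P, X x ≤ a) => ?_
  obtain ⟨x, hx⟩ := ha.exists
  exact (hX x).trans hx

theorem stmt_10 {n : ℕ} (Ω : Fin n → Type) [∀ i, MeasureSpace (Ω i)]
    [∀ i, IsProbabilityMeasure (volume : Measure (Ω i))]
    (X : (∀ i, Ω i) → ℝ) (hXmeas : Measurable X) (hX0 : ∀ x, 0 ≤ X x)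
    (hXne : X ≠ 0)
    (r : ℝ) (hr : 0 < r)
    (Ωstar : Set (∀ i, Ω i)) (hΩstar : MeasurableSet Ωstar)
    (hcert : ∀ x : ∀ i, Ω i, ∃ b : Fin n → ℝ, (∀ i, 0 ≤ b i) ∧
      (∑ i, (b i) ^ 2 ≤ r * X x) ∧
      ∀ y : ∀ i, Ω i,
        X x - ∑ i ∈ Finset.univ.filter (fun i => x i ≠ y i), b i ≤ X y) :
    ∀ t : ℝ,
      96 * r * Real.sqrt (∫ x, X x ∂(prodMeasure Ω)) + 128 * Real.sqrt r +
          8 * essSup X (prodMeasure Ω) * ((prodMeasure Ω) Ωstar).toReal < t →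
      ((prodMeasure Ω) {x | |X x - ∫ x, X x ∂(prodMeasure Ω)| > t}).toReal ≤
        4 * Real.exp (-t ^ 2 / (8 * r * ((∫ x, X x ∂(prodMeasure Ω)) + t))) +
          4 * ((prodMeasure Ω) Ωstar).toReal := by
  intro t ht
  have : IsProbabilityMeasure (prodMeasure Ω) := by unfold prodMeasure; infer_instance
  have h_sup : 0 ≤ essSup X (prodMeasure Ω) := essSup_nonneg hX0
  have h_mean : 0 ≤ ∫ x, X x ∂(prodMeasure Ω) := integral_nonneg hX0
  have ht₀ : 0 < t := lt_of_le_of_lt (by positivity) ht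
  calc (prodMeasure Ω).real {x | |X x - ∫ x, X x ∂(prodMeasure Ω)| > t}
      ≤ (prodMeasure Ω).real {x | t ≤ |X x - ∫ x, X x ∂(prodMeasure Ω)|} :=
        measureReal_mono (ofPred_subset_ofPred.2 fun _ => le_of_lt)
    _ ≤ 2 * exp (-t ^ 2 / (4 * r * ((∫ x, X x ∂(prodMeasure Ω)) + t))) :=
        stmt_10_general Ω (fun _ => volume) hXmeas hr hcert ht₀
    _ ≤ 2 * exp (-t ^ 2 / (8 * r * ((∫ x, X x ∂(prodMeasure Ω)) + t))) := by
        rw [neg_div, neg_div]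
        gcongr
        norm_num
    _ ≤ 4 * exp (-t ^ 2 / (8 * r * ((∫ x, X x ∂(prodMeasure Ω)) + t))) +
          4 * ((prodMeasure Ω) Ωstar).toReal := by
        have : 0 ≤ ((prodMeasure Ω) Ωstar).toReal := ENNReal.toReal_nonneg
        linarith [exp_pos (-t ^ 2 / (8 * r * ((∫ x, X x ∂(prodMeasure Ω)) + t)))]
end

section
/- Let B₁, B₂, …, B_n be events in a probability space and suppose D = (V,E) with V = {1,…,n} is a dependency digraph for these events. Suppose there are real numbers x₁,…,x_n with 0 ≤ x_i < 1 and Pr(B_i) ≤ x_i·Π_{(i,j) ∈ E}(1 − x_j) for every i. Then Pr(⋂_{i=1}^n B_i^c) ≥ Π_{i=1}^n (1 − x_i) > 0. -/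
open MeasureTheory
open scoped Classical

/-- The event `A` is mutually independent of the family of events `B`: for every two
disjoint finite subsets `S, T` of the index set,
`Pr(A ∩ ⋂_{j ∈ S} B j ∩ ⋂_{j ∈ T} (B j)ᶜ) = Pr(A) · Pr(⋂_{j ∈ S} B j ∩ ⋂_{j ∈ T} (B j)ᶜ)`. -/
def MutuallyIndepOf {Ω : Type} [MeasurableSpace Ω] (μ : Measure Ω) (A : Set Ω)
    {ι : Type} (B : ι → Set Ω) : Prop :=
  ∀ S T : Finset ι, Disjoint S T →
    μ (A ∩ ((⋂ j ∈ S, B j) ∩ ⋂ j ∈ T, (B j)ᶜ)) =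
      μ A * μ ((⋂ j ∈ S, B j) ∩ ⋂ j ∈ T, (B j)ᶜ)

/-!
The stronger claim to prove is that `Pr(B i ∣ ⋂ j ∈ S, (B j)ᶜ) ≤ x i` for every finite `S`, by
strong induction on `S`. Split `S` into the part `R` outside the neighbourhood of `i` and the part
`U` inside it. Given that `R` is avoided, `B i` has probability at most `x i * ∏ j ∈ U, (1 - x j)`,
while adding the events of `U` one at a time and applying the induction hypothesis at each step
shows that `U` is avoided with probability at least `∏ j ∈ U, (1 - x j)`; the two products cancel.
Adding all the events one at a time in the same way bounds the probability of avoiding them all.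
-/

section FiniteMeasure

variable {Ω ι : Type*} [MeasurableSpace Ω] {μ : Measure Ω} [IsFiniteMeasure μ]
  {B : ι → Set Ω} {x : ι → ℝ}

lemma one_sub_mul_measureReal_le_measureReal_sdiff {s t : Set Ω} {c : ℝ}
    (ht : NullMeasurableSet t μ) (h : μ.real (t ∩ s) ≤ c * μ.real s) :
    (1 - c) * μ.real s ≤ μ.real (s \ t) := by
  have hsplit : μ.real (s ∩ t) + μ.real (s \ t) = μ.real s := measureReal_inter_add_sdiff₀ ht
  rw [Set.inter_comm] at hsplit
  linarith

lemma prod_one_sub_mul_measureReal_biInter_compl_le [DecidableEq ι]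
    (hB : ∀ i, NullMeasurableSet (B i) μ) (hx1 : ∀ i, x i ≤ 1) {U R : Finset ι}
    (hUR : Disjoint U R)
    (h : ∀ T ⊂ U ∪ R, ∀ i,
      μ.real (B i ∩ ⋂ j ∈ T, (B j)ᶜ) ≤ x i * μ.real (⋂ j ∈ T, (B j)ᶜ)) :
    (∏ j ∈ U, (1 - x j)) * μ.real (⋂ j ∈ R, (B j)ᶜ) ≤ μ.real (⋂ j ∈ U ∪ R, (B j)ᶜ) := by
  induction U using Finset.induction_on with
  | empty => simp
  | insert a U haU ih =>
    obtain ⟨haR, hUR⟩ := Finset.disjoint_insert_left.1 hUR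
    have hssub : U ∪ R ⊂ insert a U ∪ R := by
      rw [Finset.insert_union]
      exact Finset.ssubset_insert (by simp [haU, haR])
    calc (∏ j ∈ insert a U, (1 - x j)) * μ.real (⋂ j ∈ R, (B j)ᶜ)
        = (1 - x a) * ((∏ j ∈ U, (1 - x j)) * μ.real (⋂ j ∈ R, (B j)ᶜ)) := by
          rw [Finset.prod_insert haU, mul_assoc]
      _ ≤ (1 - x a) * μ.real (⋂ j ∈ U ∪ R, (B j)ᶜ) :=
          mul_le_mul_of_nonneg_left (ih hUR fun T hT => h T (hT.trans hssub))
            (sub_nonneg.2 (hx1 a))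
      _ ≤ μ.real ((⋂ j ∈ U ∪ R, (B j)ᶜ) \ B a) :=
          one_sub_mul_measureReal_le_measureReal_sdiff (hB a) (h _ hssub a)
      _ = μ.real (⋂ j ∈ insert a U ∪ R, (B j)ᶜ) := by
          rw [Finset.insert_union, Finset.set_biInter_insert, Set.inter_comm, Set.sdiff_eq]

lemma measureReal_inter_biInter_compl_le_mul (hB : ∀ i, NullMeasurableSet (B i) μ)
    (hx0 : ∀ i, 0 ≤ x i) (hx1 : ∀ i, x i ≤ 1) (Γ : ι → Finset ι)
    (hΓ : ∀ i T, Disjoint T (Γ i) → μ.real (B i ∩ ⋂ j ∈ T, (B j)ᶜ) ≤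
      (x i * ∏ j ∈ Γ i, (1 - x j)) * μ.real (⋂ j ∈ T, (B j)ᶜ))
    (S : Finset ι) (i : ι) :
    μ.real (B i ∩ ⋂ j ∈ S, (B j)ᶜ) ≤ x i * μ.real (⋂ j ∈ S, (B j)ᶜ) := by
  induction S using Finset.strongInduction generalizing i with
  | H S ih =>
    have hS : S ∩ Γ i ∪ S \ Γ i = S := by rw [Finset.union_comm, Finset.sdiff_union_inter]
    have hchain : (∏ j ∈ S ∩ Γ i, (1 - x j)) * μ.real (⋂ j ∈ S \ Γ i, (B j)ᶜ) ≤
        μ.real (⋂ j ∈ S, (B j)ᶜ) := by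
      have := prod_one_sub_mul_measureReal_biInter_compl_le hB hx1
        (Finset.disjoint_sdiff_inter S (Γ i)).symm (by rwa [hS])
      rwa [hS] at this
    have hprod : ∏ j ∈ Γ i, (1 - x j) ≤ ∏ j ∈ S ∩ Γ i, (1 - x j) :=
      Finset.prod_le_prod_of_subset_of_le_one Finset.inter_subset_right
        (fun j _ => sub_nonneg.2 (hx1 j)) (fun j _ _ => sub_le_self 1 (hx0 j))
    calc μ.real (B i ∩ ⋂ j ∈ S, (B j)ᶜ)
        ≤ μ.real (B i ∩ ⋂ j ∈ S \ Γ i, (B j)ᶜ) :=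
          measureReal_mono (Set.inter_subset_inter_right _
            (Set.biInter_subset_biInter_left Finset.sdiff_subset))
      _ ≤ (x i * ∏ j ∈ Γ i, (1 - x j)) * μ.real (⋂ j ∈ S \ Γ i, (B j)ᶜ) :=
          hΓ i _ Finset.sdiff_disjoint
      _ ≤ (x i * ∏ j ∈ S ∩ Γ i, (1 - x j)) * μ.real (⋂ j ∈ S \ Γ i, (B j)ᶜ) := by
          gcongr
          exact hx0 i
      _ = x i * ((∏ j ∈ S ∩ Γ i, (1 - x j)) * μ.real (⋂ j ∈ S \ Γ i, (B j)ᶜ)) := mul_assoc _ _ _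
      _ ≤ x i * μ.real (⋂ j ∈ S, (B j)ᶜ) := mul_le_mul_of_nonneg_left hchain (hx0 i)

end FiniteMeasure

namespace MutuallyIndepOf

variable {Ω ι : Type} [MeasurableSpace Ω] {μ : Measure Ω} {A : Set Ω} {B : ι → Set Ω}

lemma measureReal_inter_biInter_compl (h : MutuallyIndepOf μ A B) (T : Finset ι) :
    μ.real (A ∩ ⋂ j ∈ T, (B j)ᶜ) = μ.real A * μ.real (⋂ j ∈ T, (B j)ᶜ) := by
  simpa [Measure.real] using congrArg ENNReal.toReal (h ∅ T (Finset.disjoint_empty_left T))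

lemma measureReal_inter_biInter_compl_of_subtype {p : ι → Prop}
    (h : MutuallyIndepOf μ A fun j : {j // p j} => B j) {T : Finset ι} (hT : ∀ j ∈ T, p j) :
    μ.real (A ∩ ⋂ j ∈ T, (B j)ᶜ) = μ.real A * μ.real (⋂ j ∈ T, (B j)ᶜ) := by
  have hreindex : ⋂ j ∈ T.subtype p, (B j)ᶜ = ⋂ j ∈ T, (B j)ᶜ := by
    ext ω
    simp only [Set.mem_iInter, Finset.mem_subtype, Subtype.forall]
    exact ⟨fun hω j hj => hω j (hT j hj) hj, fun hω j _ hj => hω j hj⟩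
  rw [← hreindex]
  exact h.measureReal_inter_biInter_compl _

lemma measureReal_inter_biInter_compl_le_mul {p : ι → Prop} {c : ℝ}
    (h : MutuallyIndepOf μ A fun j : {j // p j} => B j) (hc : μ.real A ≤ c) {T : Finset ι}
    (hT : ∀ j ∈ T, p j) :
    μ.real (A ∩ ⋂ j ∈ T, (B j)ᶜ) ≤ c * μ.real (⋂ j ∈ T, (B j)ᶜ) :=
  (h.measureReal_inter_biInter_compl_of_subtype hT).trans_le
    (mul_le_mul_of_nonneg_right hc measureReal_nonneg)

end MutuallyIndepOf

/-- The lopsided local lemma of Erdős and Spencer: only an upper bound on the probability of `B i`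
given that events outside `Γ i` are avoided is assumed, written without division. -/
theorem stmt_11_general {Ω ι : Type*} [MeasurableSpace Ω] {μ : Measure Ω} [IsProbabilityMeasure μ]
    {B : ι → Set Ω} (hB : ∀ i, NullMeasurableSet (B i) μ) (Γ : ι → Finset ι) {x : ι → ℝ}
    (hx0 : ∀ i, 0 ≤ x i) (hx1 : ∀ i, x i < 1)
    (hΓ : ∀ i T, Disjoint T (Γ i) → μ.real (B i ∩ ⋂ j ∈ T, (B j)ᶜ) ≤
      (x i * ∏ j ∈ Γ i, (1 - x j)) * μ.real (⋂ j ∈ T, (B j)ᶜ))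
    (S : Finset ι) :
    ∏ i ∈ S, (1 - x i) ≤ μ.real (⋂ i ∈ S, (B i)ᶜ) ∧ 0 < ∏ i ∈ S, (1 - x i) := by
  have hx1' : ∀ i, x i ≤ 1 := fun i => (hx1 i).le
  have hcond := measureReal_inter_biInter_compl_le_mul hB hx0 hx1' Γ hΓ
  have havoid := prod_one_sub_mul_measureReal_biInter_compl_le hB hx1'
    (Finset.disjoint_empty_right S) fun T _ => hcond T
  exact ⟨by simpa using havoid, Finset.prod_pos fun i _ => sub_pos.2 (hx1 i)⟩

theorem stmt_11 {Ω : Type} [MeasureSpace Ω]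
    [IsProbabilityMeasure (volume : Measure Ω)]
    (n : ℕ) (B : Fin n → Set Ω) (hB : ∀ i, MeasurableSet (B i))
    (Adj : Fin n → Fin n → Prop)
    -- `Adj` (i.e. the arc set E of the digraph D) is a dependency digraph for the events:
    (hdep : ∀ i : Fin n,
      MutuallyIndepOf volume (B i) (fun j : {j : Fin n // ¬ Adj i j} => B j))
    (x : Fin n → ℝ) (hx0 : ∀ i, 0 ≤ x i) (hx1 : ∀ i, x i < 1)
    (hxB : ∀ i, (volume (B i)).toReal ≤
      x i * ∏ j ∈ Finset.univ.filter (fun j => Adj i j), (1 - x j)) :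
    (∏ i, (1 - x i)) ≤ (volume (⋂ i, (B i)ᶜ)).toReal ∧ 0 < ∏ i, (1 - x i) := by
  simpa [Measure.real] using stmt_11_general (fun i => (hB i).nullMeasurableSet)
    (fun i => Finset.univ.filter fun j => Adj i j) hx0 hx1
    (fun i T hT => (hdep i).measureReal_inter_biInter_compl_le_mul (hxB i)
      (by simpa [Finset.disjoint_left] using hT)) Finset.univ
end

section
/- Let X be a non-negative bounded random variable, not identically 0, determined by n independent trials T₁,…,T_n. Let r > 0 and let Ω* be a measurable subset of the product space. Suppose that for every outcome x = (x₁,…,x_n) of the trials there exist non-negative reals b₁,…,b_n such that (1) Σ_i b_i² ≤ r·X(x), and (2) for any outcome y, X(y) ≥ X(x) − Σ_{i : x_i ≠ y_i} b_i. Then for any median Med(X) of X, |E(X) − Med(X)| ≤ 48·√(r·E(X)) + 64·√r + 4·sup(X)·Pr(Ω*). -/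
open MeasureTheory
open scoped Classical

/-- `m` is a median of the random variable `X`. -/
def IsMedian {n : ℕ} {Ω : Fin n → Type} [∀ i, MeasureSpace (Ω i)]
    (X : (∀ i, Ω i) → ℝ) (m : ℝ) : Prop :=
  (1 : ℝ) / 2 ≤ ((prodMeasure Ω) {x | X x ≤ m}).toReal ∧
  (1 : ℝ) / 2 ≤ ((prodMeasure Ω) {x | m ≤ X x}).toReal

/-!
A median minimises `c ↦ E|X - c|`, so `|E X - Med X| ≤ E|X - E X| ≤ √(Var X)`. The certificates
bound the variance: let `X⁽ⁱ⁾` be `X` with the `i`-th trial resampled independently. The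
Efron–Stein inequality, in its one-sided form, reads `Var X ≤ ∑ᵢ E ((X - X⁽ⁱ⁾)⁺)²`, and changing
the `i`-th trial alone lowers `X` by at most `bᵢ`, so the right-hand side is at most
`E ∑ᵢ bᵢ² ≤ r * E X`. Hence `|E X - Med X| ≤ √(r * E X)`.

For Efron–Stein, let `X_S` be `X` with the trials in `S` resampled, and resample the trials one at
a time, starting from `X_∅ = X`. Each step changes `E[X * X_S]` by
`E[X * (X_S - X_{S ∪ {i}})]`; exchanging the two samples of trial `i` shows that this is
`E[(X - X⁽ⁱ⁾) * (X_S - X_{S ∪ {i}})] / 2`, whose two factors have the same second moment.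
-/

open ProbabilityTheory
open scoped symmDiff

section SwapOn

variable {ι : Type*} [DecidableEq ι] {Ω : ι → Type*}

lemma symmDiff_singleton_of_notMem {S : Finset ι} {i : ι} (hi : i ∉ S) :
    S ∆ {i} = insert i S := by
  grind [Finset.mem_symmDiff]

/-- The pair obtained from `z` by exchanging the coordinates in `S` of its two entries. If the
entries of `z` are independent samples of a product measure, `(swapOn S z).1` is the first sample
with its coordinates in `S` resampled. -/
def swapOn (S : Finset ι) (z : (∀ i, Ω i) × (∀ i, Ω i)) : (∀ i, Ω i) × (∀ i, Ω i) :=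
  (S.piecewise z.2 z.1, S.piecewise z.1 z.2)

lemma swapOn_swapOn (S T : Finset ι) (z : (∀ i, Ω i) × (∀ i, Ω i)) :
    swapOn S (swapOn T z) = swapOn (S ∆ T) z := by
  ext i <;> by_cases hS : i ∈ S <;> by_cases hT : i ∈ T <;>
    simp [swapOn, Finset.piecewise, Finset.mem_symmDiff, hS, hT]

lemma swapOn_involutive (S : Finset ι) : Function.Involutive (swapOn (Ω := Ω) S) := fun z => by
  rw [swapOn_swapOn, symmDiff_self]
  simp [swapOn]

lemma swapOn_univ [Fintype ι] (z : (∀ i, Ω i) × (∀ i, Ω i)) : swapOn Finset.univ z = z.swap := by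
  simp [swapOn, Prod.swap]

lemma swapOn_singleton_fst (i : ι) (z : (∀ i, Ω i) × (∀ i, Ω i)) :
    (swapOn {i} z).1 = Function.update z.1 i (z.2 i) :=
  Finset.piecewise_singleton z.2 z.1 i

lemma swapOn_preimage_pi_prod_pi (S : Finset ι) (s t : ∀ i, Set (Ω i)) :
    swapOn S ⁻¹' (Set.univ.pi s ×ˢ Set.univ.pi t) =
      Set.univ.pi (S.piecewise t s) ×ˢ Set.univ.pi (S.piecewise s t) := by
  ext z
  simp only [swapOn, Set.mem_preimage, Set.mem_prod, Set.mem_univ_pi, ← forall_and]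
  refine forall_congr' fun i => ?_
  by_cases hi : i ∈ S <;> simp [hi, and_comm]

variable [∀ i, MeasurableSpace (Ω i)]

lemma measurable_swapOn (S : Finset ι) : Measurable (swapOn (Ω := Ω) S) := by
  refine .prodMk (measurable_pi_iff.2 fun i => ?_) (measurable_pi_iff.2 fun i => ?_) <;>
    by_cases hi : i ∈ S <;> simp only [hi, Finset.piecewise, if_true, if_false] <;> fun_prop

variable [Fintype ι] (μ : ∀ i, Measure (Ω i)) [∀ i, IsProbabilityMeasure (μ i)]

lemma measurePreserving_swapOn (S : Finset ι) :
    MeasurePreserving (swapOn S) ((Measure.pi μ).prod (Measure.pi μ))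
      ((Measure.pi μ).prod (Measure.pi μ)) := by
  refine ⟨measurable_swapOn S, Eq.symm ?_⟩
  have boxes_span := Measure.FiniteSpanningSetsIn.pi fun i => (μ i).toFiniteSpanningSetsIn
  refine Measure.prod_eq_generateFrom generateFrom_pi generateFrom_pi isPiSystem_pi isPiSystem_pi
    boxes_span boxes_span ?_
  rintro _ ⟨s, hs, rfl⟩ _ ⟨t, ht, rfl⟩
  rw [Measure.map_apply (measurable_swapOn S)
    ((MeasurableSet.univ_pi fun i => hs i trivial).prod
      (MeasurableSet.univ_pi fun i => ht i trivial)), swapOn_preimage_pi_prod_pi]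
  simp only [Measure.prod_prod, Measure.pi_pi, ← Finset.prod_mul_distrib]
  refine Finset.prod_congr rfl fun i _ => ?_
  by_cases hi : i ∈ S <;> simp [hi, mul_comm]

lemma integral_comp_swapOn (S : Finset ι) (g : (∀ i, Ω i) × (∀ i, Ω i) → ℝ) :
    ∫ z, g (swapOn S z) ∂(Measure.pi μ).prod (Measure.pi μ) =
      ∫ z, g z ∂(Measure.pi μ).prod (Measure.pi μ) :=
  (measurePreserving_swapOn μ S).integral_comp
    (MeasurableEquiv.ofInvolutive _ (swapOn_involutive S)
      (measurable_swapOn S)).measurableEmbedding g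

end SwapOn

section EfronStein

variable {ι : Type*} [Fintype ι] [DecidableEq ι] {Ω : ι → Type*} [∀ i, MeasurableSpace (Ω i)]
  {μ : ∀ i, Measure (Ω i)} [∀ i, IsProbabilityMeasure (μ i)] {f : (∀ i, Ω i) → ℝ}

lemma memLp_fst_swapOn (hf : MemLp f 2 (Measure.pi μ)) (S : Finset ι) :
    MemLp (fun z => f (swapOn S z).1) 2 ((Measure.pi μ).prod (Measure.pi μ)) :=
  hf.comp_measurePreserving (measurePreserving_fst.comp (measurePreserving_swapOn μ S))

lemma memLp_sub_update (hf : MemLp f 2 (Measure.pi μ)) (i : ι) :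
    MemLp (fun z : (∀ i, Ω i) × (∀ i, Ω i) => f z.1 - f (Function.update z.1 i (z.2 i))) 2
      ((Measure.pi μ).prod (Measure.pi μ)) := by
  simp only [← swapOn_singleton_fst]
  exact (hf.comp_fst _).sub (memLp_fst_swapOn hf {i})

lemma integral_swapOn_sub_swapOn_insert_sq {S : Finset ι} {i : ι} (hi : i ∉ S) :
    ∫ z, (f (swapOn S z).1 - f (swapOn (insert i S) z).1) ^ 2
        ∂(Measure.pi μ).prod (Measure.pi μ) =
      ∫ z, (f z.1 - f (Function.update z.1 i (z.2 i))) ^ 2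
        ∂(Measure.pi μ).prod (Measure.pi μ) := by
  simp only [← swapOn_singleton_fst]
  rw [← integral_comp_swapOn μ S fun z => (f z.1 - f (swapOn {i} z).1) ^ 2]
  simp only [swapOn_swapOn, symmDiff_comm {i} S, symmDiff_singleton_of_notMem hi]

lemma two_mul_integral_mul_swapOn_sub_swapOn_insert (hf : MemLp f 2 (Measure.pi μ))
    {S : Finset ι} {i : ι} (hi : i ∉ S) :
    2 * ∫ z, f z.1 * (f (swapOn S z).1 - f (swapOn (insert i S) z).1)
        ∂(Measure.pi μ).prod (Measure.pi μ) =
      ∫ z, (f z.1 - f (Function.update z.1 i (z.2 i))) *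
        (f (swapOn S z).1 - f (swapOn (insert i S) z).1)
        ∂(Measure.pi μ).prod (Measure.pi μ) := by
  have insert_eq := symmDiff_singleton_of_notMem hi
  have erase_eq : insert i S ∆ {i} = S := by rw [← insert_eq, symmDiff_symmDiff_cancel_right]
  simp only [← swapOn_singleton_fst]
  set P := (Measure.pi μ).prod (Measure.pi μ)
  set B : (∀ i, Ω i) × (∀ i, Ω i) → ℝ :=
    fun z => f (swapOn S z).1 - f (swapOn (insert i S) z).1
  have hB : MemLp B 2 P := (memLp_fst_swapOn hf S).sub (memLp_fst_swapOn hf (insert i S))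
  have B_swapOn (z) : B (swapOn {i} z) = -B z := by
    simp only [B, swapOn_swapOn, insert_eq, erase_eq, neg_sub]
  have antisymm : ∫ z, f (swapOn {i} z).1 * B z ∂P = -∫ z, f z.1 * B z ∂P := by
    rw [← integral_comp_swapOn μ {i} fun z => f z.1 * B z, ← integral_neg]
    simp only [B_swapOn, mul_neg, neg_neg, P]
  calc 2 * ∫ z, f z.1 * B z ∂P = ∫ z, f z.1 * B z ∂P - ∫ z, f (swapOn {i} z).1 * B z ∂P := by
        rw [antisymm]; ring
    _ = ∫ z, (f z.1 - f (swapOn {i} z).1) * B z ∂P := by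
        simp only [sub_mul]
        exact (integral_sub ((hf.comp_fst _).integrable_mul hB)
          ((memLp_fst_swapOn hf {i}).integrable_mul hB)).symm

lemma integral_mul_swapOn_sub_swapOn_insert_le (hf : MemLp f 2 (Measure.pi μ)) {S : Finset ι}
    {i : ι} (hi : i ∉ S) :
    ∫ z, f z.1 * (f (swapOn S z).1 - f (swapOn (insert i S) z).1)
        ∂(Measure.pi μ).prod (Measure.pi μ) ≤
      (∫ z, (f z.1 - f (Function.update z.1 i (z.2 i))) ^ 2
        ∂(Measure.pi μ).prod (Measure.pi μ)) / 2 := by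
  have integral_mul_eq := two_mul_integral_mul_swapOn_sub_swapOn_insert hf hi
  have integral_sq_eq := integral_swapOn_sub_swapOn_insert_sq (μ := μ) (f := f) hi
  set P := (Measure.pi μ).prod (Measure.pi μ)
  set A : (∀ i, Ω i) × (∀ i, Ω i) → ℝ := fun z => f z.1 - f (Function.update z.1 i (z.2 i))
  set B : (∀ i, Ω i) × (∀ i, Ω i) → ℝ :=
    fun z => f (swapOn S z).1 - f (swapOn (insert i S) z).1
  have hA : MemLp A 2 P := memLp_sub_update hf i
  have hB : MemLp B 2 P := (memLp_fst_swapOn hf S).sub (memLp_fst_swapOn hf (insert i S))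
  have amgm : ∫ z, A z * B z ∂P ≤ ∫ z, (A z ^ 2 + B z ^ 2) / 2 ∂P :=
    integral_mono (hA.integrable_mul hB) ((hA.integrable_sq.add hB.integrable_sq).div_const 2)
      fun z => by dsimp only; linarith [two_mul_le_add_sq (A z) (B z)]
  rw [integral_div, integral_add hA.integrable_sq hB.integrable_sq] at amgm
  linarith

lemma integral_mul_sub_swapOn_le (hf : MemLp f 2 (Measure.pi μ)) (S : Finset ι) :
    ∫ z, f z.1 * (f z.1 - f (swapOn S z).1) ∂(Measure.pi μ).prod (Measure.pi μ) ≤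
      ∑ i ∈ S, (∫ z, (f z.1 - f (Function.update z.1 i (z.2 i))) ^ 2
        ∂(Measure.pi μ).prod (Measure.pi μ)) / 2 := by
  induction S using Finset.induction_on with
  | empty => simp [swapOn]
  | insert i S hi ih =>
    have hfst := hf.comp_fst (Measure.pi μ)
    have split : ∫ z, f z.1 * (f z.1 - f (swapOn (insert i S) z).1)
          ∂(Measure.pi μ).prod (Measure.pi μ) =
        ∫ z, f z.1 * (f (swapOn S z).1 - f (swapOn (insert i S) z).1)
          ∂(Measure.pi μ).prod (Measure.pi μ) +
        ∫ z, f z.1 * (f z.1 - f (swapOn S z).1) ∂(Measure.pi μ).prod (Measure.pi μ) := by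
      refine Eq.trans ?_ (integral_add
        (hfst.integrable_mul ((memLp_fst_swapOn hf S).sub (memLp_fst_swapOn hf (insert i S))))
        (hfst.integrable_mul (hfst.sub (memLp_fst_swapOn hf S))))
      congr! 2 with z
      ring
    rw [split, Finset.sum_insert hi]
    exact add_le_add (integral_mul_swapOn_sub_swapOn_insert_le hf hi) ih

lemma variance_eq_integral_prod_mul_sub {α : Type*} [MeasurableSpace α] {ν : Measure α}
    [IsProbabilityMeasure ν] {g : α → ℝ} (hg : MemLp g 2 ν) :
    Var[g; ν] = ∫ z, g z.1 * (g z.1 - g z.2) ∂ν.prod ν := by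
  have hfst := hg.comp_fst ν
  calc Var[g; ν] = ∫ x, g x * g x ∂ν - (∫ x, g x ∂ν) * ∫ x, g x ∂ν := by
        simp only [variance_eq_sub hg, Pi.pow_apply, sq]
    _ = ∫ z, g z.1 * g z.1 ∂ν.prod ν - ∫ z, g z.1 * g z.2 ∂ν.prod ν := by
        rw [integral_prod_mul, integral_fun_fst fun x => g x * g x, probReal_univ, one_smul]
    _ = ∫ z, g z.1 * (g z.1 - g z.2) ∂ν.prod ν := by
        simp only [mul_sub]
        exact (integral_sub (hfst.integrable_mul hfst)
          (hfst.integrable_mul (hg.comp_snd ν))).symm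

/-- The **Efron–Stein inequality**. -/
theorem variance_pi_le_sum_integral_sub_update_sq (hf : MemLp f 2 (Measure.pi μ)) :
    Var[f; Measure.pi μ] ≤
      ∑ i, (∫ z, (f z.1 - f (Function.update z.1 i (z.2 i))) ^ 2
        ∂(Measure.pi μ).prod (Measure.pi μ)) / 2 := by
  rw [variance_eq_integral_prod_mul_sub hf]
  simpa only [swapOn_univ, Prod.fst_swap] using integral_mul_sub_swapOn_le hf Finset.univ

lemma integral_sub_update_sq_eq_two_mul (hf : MemLp f 2 (Measure.pi μ)) (i : ι) :
    ∫ z, (f z.1 - f (Function.update z.1 i (z.2 i))) ^ 2 ∂(Measure.pi μ).prod (Measure.pi μ) =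
      2 * ∫ z, ((f z.1 - f (Function.update z.1 i (z.2 i)))⁺) ^ 2
        ∂(Measure.pi μ).prod (Measure.pi μ) := by
  set P := (Measure.pi μ).prod (Measure.pi μ)
  set D : (∀ i, Ω i) × (∀ i, Ω i) → ℝ := fun z => f z.1 - f (Function.update z.1 i (z.2 i))
  have hD : MemLp D 2 P := memLp_sub_update hf i
  have D_swapOn (z) : D (swapOn {i} z) = -D z := by
    simp [D, ← swapOn_singleton_fst, swapOn_involutive {i} z]
  have sq_eq (a : ℝ) : a ^ 2 = a⁺ ^ 2 + (-a)⁺ ^ 2 := by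
    rcases le_total a 0 with h | h <;> simp [h]
  calc ∫ z, D z ^ 2 ∂P = ∫ z, (D z)⁺ ^ 2 + (-D z)⁺ ^ 2 ∂P := by simp only [← sq_eq]
    _ = ∫ z, (D z)⁺ ^ 2 ∂P + ∫ z, (D (swapOn {i} z))⁺ ^ 2 ∂P := by
      simp only [D_swapOn]
      exact integral_add hD.pos_part.integrable_sq hD.neg.pos_part.integrable_sq
    _ = 2 * ∫ z, (D z)⁺ ^ 2 ∂P := by
      rw [integral_comp_swapOn μ {i} fun z => (D z)⁺ ^ 2, two_mul]

lemma variance_pi_le_sum_integral_posPart_sub_update_sq (hf : MemLp f 2 (Measure.pi μ)) :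
    Var[f; Measure.pi μ] ≤
      ∑ i, ∫ z, ((f z.1 - f (Function.update z.1 i (z.2 i)))⁺) ^ 2
        ∂(Measure.pi μ).prod (Measure.pi μ) := by
  simpa only [integral_sub_update_sq_eq_two_mul hf, mul_div_cancel_left₀ _ (two_ne_zero' ℝ)]
    using variance_pi_le_sum_integral_sub_update_sq hf

theorem variance_pi_le_integral_of_sub_update_le (hf : MemLp f 2 (Measure.pi μ))
    {g : (∀ i, Ω i) → ℝ} (hg : Integrable g (Measure.pi μ))
    (hfg : ∀ x, ∃ b : ι → ℝ, (∀ i, 0 ≤ b i) ∧ ∑ i, b i ^ 2 ≤ g x ∧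
      ∀ i t, f x - f (Function.update x i t) ≤ b i) :
    Var[f; Measure.pi μ] ≤ ∫ x, g x ∂Measure.pi μ := by
  have hint (i : ι) := (memLp_sub_update hf i).pos_part.integrable_sq
  calc Var[f; Measure.pi μ]
      ≤ ∑ i, ∫ z, ((f z.1 - f (Function.update z.1 i (z.2 i)))⁺) ^ 2
          ∂(Measure.pi μ).prod (Measure.pi μ) :=
        variance_pi_le_sum_integral_posPart_sub_update_sq hf
    _ = ∫ z, ∑ i, ((f z.1 - f (Function.update z.1 i (z.2 i)))⁺) ^ 2
          ∂(Measure.pi μ).prod (Measure.pi μ) :=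
        (integral_finsetSum _ fun i _ => hint i).symm
    _ ≤ ∫ z, g z.1 ∂(Measure.pi μ).prod (Measure.pi μ) := by
        refine integral_mono (integrable_finsetSum _ fun i _ => hint i) (hg.comp_fst _) fun z => ?_
        obtain ⟨b, b_nonneg, sum_sq_le, sub_le⟩ := hfg z.1
        refine (Finset.sum_le_sum fun i _ => ?_).trans sum_sq_le
        exact pow_le_pow_left₀ (posPart_nonneg _) (sup_le (sub_le i _) (b_nonneg i)) 2
    _ = ∫ x, g x ∂Measure.pi μ := by simp [integral_fun_fst]

end EfronStein

section Median

variable {α : Type*} [MeasurableSpace α] {μ : Measure α} {X : α → ℝ} {m : ℝ}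

lemma essSup_nonneg_s14 [NeZero μ] (hX : 0 ≤ᵐ[μ] X) : 0 ≤ essSup X μ := by
  rw [essSup_eq_sInf]
  refine Real.sInf_nonneg fun a (ha : μ {x | a < X x} = 0) => ?_
  have le_a : ∀ᵐ x ∂μ, X x ≤ a := by simpa only [ae_iff, not_le] using ha
  obtain ⟨x, nonneg_x, x_le⟩ := (hX.and le_a).exists
  exact nonneg_x.trans x_le

variable [IsProbabilityMeasure μ]

lemma integral_abs_sub_le_of_half_le_of_le (hX : Integrable X μ)
    (hm : 1 / 2 ≤ μ.real {x | X x ≤ m}) {c : ℝ} (hmc : m ≤ c) :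
    ∫ x, |X x - m| ∂μ ≤ ∫ x, |X x - c| ∂μ := by
  have hs : NullMeasurableSet {x | X x ≤ m} μ := nullMeasurableSet_le hX.aemeasurable (by fun_prop)
  have hind : Integrable ({x | X x ≤ m}.indicator fun _ => 2 * (c - m)) μ :=
    (integrable_const _).indicator₀ hs
  have hdist (d : ℝ) : Integrable (fun x => |X x - d|) μ := (hX.sub (integrable_const d)).abs
  -- Moving the centre from `m` to `c` adds `c - m` to the distance where `X ≤ m` and removes at
  -- most `c - m` elsewhere.
  have pointwise (x : α) :
      |X x - m| + {x | X x ≤ m}.indicator (fun _ => 2 * (c - m)) x ≤ |X x - c| + (c - m) := by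
    by_cases hx : X x ≤ m
    · rw [Set.indicator_of_mem (by exact hx), abs_of_nonpos (by linarith),
        abs_of_nonpos (by linarith)]
      linarith
    · rw [Set.indicator_of_notMem (by exact hx)]
      linarith [abs_sub_le (X x) c m, abs_of_nonneg (sub_nonneg.2 hmc)]
  have integrated := integral_mono ((hdist m).add hind) ((hdist c).add (integrable_const (c - m)))
    pointwise
  simp only [Pi.add_apply] at integrated
  rw [integral_add (hdist m) hind, integral_add (hdist c) (integrable_const _),
    integral_indicator₀ hs, setIntegral_const, integral_const, probReal_univ] at integrated
  simp only [smul_eq_mul] at integrated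
  linarith [mul_le_mul_of_nonneg_right hm (sub_nonneg.2 hmc)]

lemma integral_abs_sub_median_le (hX : Integrable X μ) (hle : 1 / 2 ≤ μ.real {x | X x ≤ m})
    (hge : 1 / 2 ≤ μ.real {x | m ≤ X x}) (c : ℝ) :
    ∫ x, |X x - m| ∂μ ≤ ∫ x, |X x - c| ∂μ := by
  rcases le_total m c with hmc | hcm
  · exact integral_abs_sub_le_of_half_le_of_le hX hle hmc
  · have neg_le := integral_abs_sub_le_of_half_le_of_le (m := -m) (c := -c) hX.neg
      (by simpa using hge) (neg_le_neg hcm)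
    simpa only [Pi.neg_apply, neg_sub_neg, abs_sub_comm] using neg_le

lemma integral_abs_sub_integral_le_sqrt_variance (hX : MemLp X 2 μ) :
    ∫ x, |X x - ∫ y, X y ∂μ| ∂μ ≤ √(Var[X; μ]) := by
  have hdev : MemLp (fun x => |X x - ∫ y, X y ∂μ|) 2 μ := (hX.sub (memLp_const _)).abs
  have jensen := variance_nonneg (fun x => |X x - ∫ y, X y ∂μ|) μ
  rw [variance_eq_sub hdev] at jensen
  refine Real.le_sqrt_of_sq_le ?_
  rw [variance_eq_integral hX.aemeasurable]
  simpa only [Pi.pow_apply, sq_abs, sub_nonneg] using jensen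

theorem abs_integral_sub_median_le_sqrt_variance (hX : MemLp X 2 μ)
    (hle : 1 / 2 ≤ μ.real {x | X x ≤ m}) (hge : 1 / 2 ≤ μ.real {x | m ≤ X x}) :
    |∫ x, X x ∂μ - m| ≤ √(Var[X; μ]) := by
  have hint : Integrable X μ := hX.integrable one_le_two
  calc |∫ x, X x ∂μ - m| = |∫ x, (X x - m) ∂μ| := by
        rw [integral_sub hint (integrable_const m)]; simp
    _ ≤ ∫ x, |X x - m| ∂μ := abs_integral_le_integral_abs
    _ ≤ ∫ x, |X x - ∫ y, X y ∂μ| ∂μ := integral_abs_sub_median_le hint hle hge _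
    _ ≤ √(Var[X; μ]) := integral_abs_sub_integral_le_sqrt_variance hX

end Median

lemma sum_filter_ne_update_le {ι : Type*} [Fintype ι] [DecidableEq ι] {Ω : ι → Type*} {b : ι → ℝ}
    (hb : ∀ i, 0 ≤ b i) (x : ∀ i, Ω i) (i : ι) (t : Ω i) :
    ∑ j with x j ≠ Function.update x i t j, b j ≤ b i := by
  rw [← Finset.sum_singleton b i]
  refine Finset.sum_le_sum_of_subset_of_nonneg (fun j hj => ?_) fun j _ _ => hb j
  by_contra hji
  simp_all

theorem stmt_14_general {ι : Type*} [Fintype ι] {Ω : ι → Type*} [∀ i, MeasurableSpace (Ω i)]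
    (μ : ∀ i, Measure (Ω i)) [∀ i, IsProbabilityMeasure (μ i)] {X : (∀ i, Ω i) → ℝ}
    (hX : MemLp X 2 (Measure.pi μ)) {r : ℝ}
    (hcert : ∀ x, ∃ b : ι → ℝ, (∀ i, 0 ≤ b i) ∧ ∑ i, b i ^ 2 ≤ r * X x ∧
      ∀ y, X x - ∑ i with x i ≠ y i, b i ≤ X y)
    {m : ℝ} (hle : 1 / 2 ≤ (Measure.pi μ).real {x | X x ≤ m})
    (hge : 1 / 2 ≤ (Measure.pi μ).real {x | m ≤ X x}) :
    |∫ x, X x ∂Measure.pi μ - m| ≤ √(r * ∫ x, X x ∂Measure.pi μ) := by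
  refine (abs_integral_sub_median_le_sqrt_variance hX hle hge).trans (Real.sqrt_le_sqrt ?_)
  rw [← integral_const_mul]
  refine variance_pi_le_integral_of_sub_update_le hX ((hX.integrable one_le_two).const_mul r)
    fun x => ?_
  obtain ⟨b, b_nonneg, sum_sq_le, sub_le⟩ := hcert x
  exact ⟨b, b_nonneg, sum_sq_le, fun i t => by
    linarith [sub_le (Function.update x i t), sum_filter_ne_update_le b_nonneg x i t]⟩

theorem stmt_14 {n : ℕ} (Ω : Fin n → Type) [∀ i, MeasureSpace (Ω i)]
    [∀ i, IsProbabilityMeasure (volume : Measure (Ω i))]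
    (X : (∀ i, Ω i) → ℝ) (hXmeas : Measurable X) (hX0 : ∀ x, 0 ≤ X x)
    (hXne : X ≠ 0) (hXbdd : BddAbove (Set.range X))
    (r : ℝ) (hr : 0 < r)
    (Ωstar : Set (∀ i, Ω i)) (hΩstar : MeasurableSet Ωstar)
    (hcert : ∀ x : ∀ i, Ω i, ∃ b : Fin n → ℝ, (∀ i, 0 ≤ b i) ∧
      (∑ i, (b i) ^ 2 ≤ r * X x) ∧
      ∀ y : ∀ i, Ω i,
        X x - ∑ i ∈ Finset.univ.filter (fun i => x i ≠ y i), b i ≤ X y) :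
    ∀ m : ℝ, IsMedian X m →
      |(∫ x, X x ∂(prodMeasure Ω)) - m| ≤
        48 * Real.sqrt (r * ∫ x, X x ∂(prodMeasure Ω)) + 64 * Real.sqrt r +
          4 * essSup X (prodMeasure Ω) * ((prodMeasure Ω) Ωstar).toReal := by
  intro m hm
  have : IsProbabilityMeasure (prodMeasure Ω) := inferInstanceAs (IsProbabilityMeasure (.pi _))
  obtain ⟨M, hM⟩ := hXbdd
  have hX : MemLp X 2 (prodMeasure Ω) := .of_bound hXmeas.aestronglyMeasurable M <| .of_forall
    fun x => (Real.norm_of_nonneg (hX0 x)).trans_le (hM ⟨x, rfl⟩)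
  have key := stmt_14_general (fun i => (volume : Measure (Ω i))) hX hcert hm.1 hm.2
  have hstar : 0 ≤ 4 * essSup X (prodMeasure Ω) * ((prodMeasure Ω) Ωstar).toReal :=
    mul_nonneg (mul_nonneg zero_le_four (essSup_nonneg_s14 (.of_forall hX0))) ENNReal.toReal_nonneg
  rw [← prodMeasure] at key
  linarith [Real.sqrt_nonneg (r * ∫ x, X x ∂(prodMeasure Ω)), Real.sqrt_nonneg r]
end

section
/- Let (Ω_i, Σ_i, Pr_i), i = 1,…,n, be probability spaces and let (Ω, Σ, Pr) be their product. For a set A ⊆ Ω and a point x ∈ Ω, let d(x,A) = sup over all b ∈ ℝⁿ with ‖b‖₂ = 1 of min over y ∈ A of Σ_{i : x_i ≠ y_i} b_i, and let A_t = {x ∈ Ω : d(x,A) ≤ t}. Then for every measurable A ⊆ Ω and every t ≥ 0, Pr(A)·Pr(Ω ∖ A_t) ≤ exp(−t²/4). -/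
open MeasureTheory
open scoped Classical

/-- Talagrand's convex distance `d(x, A)`: the supremum over unit vectors
`b ∈ ℝⁿ` (i.e. `‖b‖₂ = 1`) of the infimum over `y ∈ A` of `Σ_{i : x i ≠ y i} b i`. -/
noncomputable def talagrandDist {n : ℕ} {Ω : Fin n → Type}
    (x : ∀ i, Ω i) (A : Set (∀ i, Ω i)) : ℝ :=
  ⨆ b : {b : Fin n → ℝ // ∑ i, (b i) ^ 2 = 1},
    ⨅ y : A, ∑ i ∈ Finset.univ.filter (fun i => x i ≠ (y : ∀ i, Ω i) i),
      (b : Fin n → ℝ) i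

/-!
Talagrand's induction on the number of coordinates. For fixed `x` and `A` put
`h b y = Σ_{i : x i ≠ y i} b i`. Optimising over the length of `b` shows that `d(x, A)² / 4` is the
supremum over all `b ∈ ℝⁿ` of `(inf_{y ∈ A} h b y) - ‖b‖²`; the exponential of the latter, here
called the convex potential, is the quantity whose mean is shown to be at most `1 / Pr(A)`.
Markov's inequality then gives the tail bound.

For the induction step fix the coordinate `ω = x p`, and let `C` be the slice of `A` at `ω` and `B`
the projection of `A` along the coordinate `p`. Moving from `x` into `A` either inside `C`, or
inside `B` at the price of changing the coordinate `p`, bounds the potential of `A` by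
`Φ_C ^ (1 - θ) * Φ_B ^ θ * exp (θ² / 4)` for every `θ ∈ [0, 1]`. Hölder's inequality, the induction
hypothesis and the best choice of `θ` for the ratio `r = Pr(C) / Pr(B)` bound the mean over the
other coordinates by `(2 - r) / Pr(B)`, and averaging over `ω` leaves `u (2 - u) ≤ 1`.

Neither the projection `B` nor the potential needs to be measurable. So `B` is replaced by the set
of points whose fibre has positive measure, and the mean of the potential by that of a measurable
majorant, which is chosen jointly measurably in an auxiliary parameter `τ : T` that records the
coordinates already fixed.
-/

open scoped ENNReal

universe u

section Interpolation

/-- The bound `g₁ ^ (1 - θ) * g₂ ^ θ * exp (θ² / 4)` that the induction step produces from the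
bounds `g₁` on a slice and `g₂` on the projection. -/
noncomputable def interp (θ : ℝ) (g₁ g₂ : ℝ≥0∞) : ℝ≥0∞ :=
  g₁ ^ (1 - θ) * g₂ ^ θ * ENNReal.ofReal (Real.exp (θ ^ 2 / 4))

theorem measurable_interp {α : Type*} [MeasurableSpace α] {θ : α → ℝ} {g₁ g₂ : α → ℝ≥0∞}
    (hθ : Measurable θ) (hg₁ : Measurable g₁) (hg₂ : Measurable g₂) :
    Measurable fun x => interp (θ x) (g₁ x) (g₂ x) := by
  unfold interp
  fun_prop

theorem interp_mono {θ : ℝ} (hθ : θ ∈ Set.Icc 0 1) {f₁ f₂ g₁ g₂ : ℝ≥0∞} (h₁ : f₁ ≤ g₁)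
    (h₂ : f₂ ≤ g₂) : interp θ f₁ f₂ ≤ interp θ g₁ g₂ := by
  unfold interp
  gcongr
  exacts [sub_nonneg.2 hθ.2, hθ.1]

theorem lintegral_interp_le {α : Type*} [MeasurableSpace α] {μ : Measure α} {θ : ℝ}
    (hθ : θ ∈ Set.Icc 0 1) {g₁ g₂ : α → ℝ≥0∞} (hg₁ : AEMeasurable g₁ μ)
    (hg₂ : AEMeasurable g₂ μ) :
    ∫⁻ x, interp θ (g₁ x) (g₂ x) ∂μ ≤ interp θ (∫⁻ x, g₁ x ∂μ) (∫⁻ x, g₂ x ∂μ) := by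
  unfold interp
  rw [lintegral_mul_const' _ _ ENNReal.ofReal_ne_top]
  gcongr
  exact ENNReal.lintegral_mul_norm_pow_le hg₁ hg₂ (sub_nonneg.2 hθ.2) hθ.1 (sub_add_cancel 1 θ)

theorem interp_inv_inv {θ : ℝ} (hθ : θ ≤ 1) {a b : ℝ≥0∞} (hb : b ≠ 0) (hb' : b ≠ ∞) :
    interp θ a⁻¹ b⁻¹ = b⁻¹ * interp θ (a / b)⁻¹ 1 := by
  have hsplit : b⁻¹ ^ θ = b⁻¹ * b ^ (1 - θ) := by
    rw [ENNReal.rpow_sub _ _ hb hb', ENNReal.rpow_one, ENNReal.inv_rpow, div_eq_mul_inv,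
      ← mul_assoc, ENNReal.inv_mul_cancel hb hb', one_mul]
  have hratio : (a / b)⁻¹ = a⁻¹ * b := by
    rw [ENNReal.inv_div (.inl hb') (.inl hb), div_eq_mul_inv, mul_comm]
  rw [interp, interp, hsplit, hratio, ENNReal.mul_rpow_of_nonneg _ _ (sub_nonneg.2 hθ),
    ENNReal.one_rpow]
  ring

/-- The exponent `θ ∈ [0, 1]` minimising `r⁻¹ ^ (1 - θ) * exp (θ² / 4)` for a ratio `r ≤ 1`, namely
`-2 log r` cut off at `1`. Clamping `r` instead of the logarithm avoids the junk value
`Real.log 0 = 0`. -/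
noncomputable def interpExponent (r : ℝ≥0∞) : ℝ :=
  -2 * Real.log (max (Real.exp (-1 / 2)) (min 1 r.toReal))

@[fun_prop]
theorem measurable_interpExponent : Measurable interpExponent := by
  unfold interpExponent
  fun_prop

theorem interpExponent_mem_Icc (r : ℝ≥0∞) : interpExponent r ∈ Set.Icc 0 1 := by
  set s := max (Real.exp (-1 / 2)) (min 1 r.toReal) with hs
  have hs_ge : Real.exp (-1 / 2) ≤ s := le_max_left _ _
  have hs_le : s ≤ 1 := max_le (Real.exp_le_one_iff.2 (by norm_num)) (min_le_left _ _)
  have hs_pos : 0 < s := (Real.exp_pos _).trans_le hs_ge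
  have hlog_ge := (Real.le_log_iff_exp_le hs_pos).2 hs_ge
  have hlog_le := Real.log_nonpos hs_pos.le hs_le
  constructor <;> rw [interpExponent, ← hs] <;> linarith

theorem interpExponent_of_le {r : ℝ≥0∞} (hr : r ≤ ENNReal.ofReal (Real.exp (-1 / 2))) :
    interpExponent r = 1 := by
  have hr' := ENNReal.toReal_le_of_le_ofReal (Real.exp_pos _).le hr
  rw [interpExponent, max_eq_left ((min_le_right _ _).trans hr'), Real.log_exp]
  norm_num

theorem interpExponent_ofReal_exp_neg {u : ℝ} (h0 : 0 ≤ u) (h1 : u ≤ 1 / 2) :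
    interpExponent (ENNReal.ofReal (Real.exp (-u))) = 2 * u := by
  rw [interpExponent, ENNReal.toReal_ofReal (Real.exp_pos _).le,
    min_eq_right (Real.exp_le_one_iff.2 (by linarith)),
    max_eq_right (Real.exp_le_exp.2 (by linarith)), Real.log_exp]
  ring

theorem exp_sub_sq_add_exp_neg_le_two_s15 {u : ℝ} (h0 : 0 ≤ u) (h1 : u ≤ 1 / 2) :
    Real.exp (u - u ^ 2) + Real.exp (-u) ≤ 2 := by
  -- Factoring out `exp (-u² / 2)` makes the two exponents opposite, which leaves a `cosh`.
  set v := u - u ^ 2 / 2 with hv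
  have hv_sq : v ^ 2 ≤ u ^ 2 := by
    have : 0 ≤ u ^ 2 := sq_nonneg u
    exact pow_le_pow_left₀ (by nlinarith) (by linarith) 2
  calc Real.exp (u - u ^ 2) + Real.exp (-u)
      = 2 * (Real.exp (-(u ^ 2 / 2)) * Real.cosh v) := by
        rw [Real.cosh_eq, mul_div_assoc', mul_div_cancel₀ _ two_ne_zero, mul_add,
          ← Real.exp_add, ← Real.exp_add, hv]
        ring_nf
    _ ≤ 2 * (Real.exp (-(u ^ 2 / 2)) * Real.exp (u ^ 2 / 2)) := by
        gcongr
        exact (Real.cosh_le_exp_half_sq v).trans (Real.exp_le_exp.2 (by linarith))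
    _ = 2 := by rw [← Real.exp_add, neg_add_cancel, Real.exp_zero, mul_one]

theorem interp_interpExponent_add_le_two {r : ℝ≥0∞} (hr : r ≤ 1) :
    interp (interpExponent r) r⁻¹ 1 + r ≤ 2 := by
  rcases le_or_gt r (ENNReal.ofReal (Real.exp (-1 / 2))) with hsmall | hlarge
  · calc interp (interpExponent r) r⁻¹ 1 + r
        ≤ ENNReal.ofReal (Real.exp (1 / 4)) + ENNReal.ofReal (Real.exp (-1 / 2)) := by
          simpa [interp, interpExponent_of_le hsmall] using hsmall
      _ ≤ ENNReal.ofReal 2 := by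
          rw [← ENNReal.ofReal_add (Real.exp_pos _).le (Real.exp_pos _).le]
          have := exp_sub_sq_add_exp_neg_le_two_s15 (u := 1 / 2) (by norm_num) le_rfl
          norm_num at this ⊢
          exact this
      _ = 2 := ENNReal.ofReal_ofNat 2
  · have hr_top : r ≠ ∞ := ne_top_of_le_ne_top ENNReal.one_ne_top hr
    obtain ⟨u, rfl⟩ : ∃ u, r = ENNReal.ofReal (Real.exp (-u)) := by
      refine ⟨-Real.log r.toReal, ?_⟩
      rw [neg_neg, Real.exp_log (ENNReal.toReal_pos (bot_lt_of_lt hlarge).ne' hr_top),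
        ENNReal.ofReal_toReal hr_top]
    have hu0 : 0 ≤ u := by simpa using hr
    have hu1 : u ≤ 1 / 2 := by
      have := Real.exp_le_exp.1 ((ENNReal.ofReal_le_ofReal_iff (Real.exp_pos _).le).1 hlarge.le)
      linarith
    have hexponent : u * (1 - 2 * u) + (2 * u) ^ 2 / 4 = u - u ^ 2 := by ring
    rw [interpExponent_ofReal_exp_neg hu0 hu1, interp, ENNReal.one_rpow, mul_one,
      ← ENNReal.ofReal_inv_of_pos (Real.exp_pos _), ← Real.exp_neg, neg_neg,
      ENNReal.ofReal_rpow_of_pos (Real.exp_pos _), ← Real.exp_mul,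
      ← ENNReal.ofReal_mul (Real.exp_pos _).le, ← Real.exp_add, hexponent,
      ← ENNReal.ofReal_add (Real.exp_pos _).le (Real.exp_pos _).le]
    exact ENNReal.ofReal_le_of_le_toReal (exp_sub_sq_add_exp_neg_le_two_s15 hu0 hu1)

theorem le_inv_of_add_le_two {a b : ℝ≥0∞} (h : a + b ≤ 2) : a ≤ b⁻¹ := by
  lift a to NNReal using ne_top_of_le_ne_top ENNReal.ofNat_ne_top (le_self_add.trans h)
  lift b to NNReal using ne_top_of_le_ne_top ENNReal.ofNat_ne_top (le_add_self.trans h)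
  rw [ENNReal.le_inv_iff_mul_le]
  norm_cast at h ⊢
  rw [← NNReal.coe_le_coe] at h ⊢
  push_cast at h ⊢
  nlinarith [sq_nonneg ((a : ℝ) - b), a.coe_nonneg, b.coe_nonneg]

theorem lintegral_interp_inv_le {α : Type*} [MeasurableSpace α] {μ : Measure α}
    [IsProbabilityMeasure μ] {a : α → ℝ≥0∞} (ha : AEMeasurable a μ) {b : ℝ≥0∞} (hb : b ≠ ∞)
    (hab : ∀ᵐ x ∂μ, a x ≤ b) :
    ∫⁻ x, interp (interpExponent (a x / b)) (a x)⁻¹ b⁻¹ ∂μ ≤ (∫⁻ x, a x ∂μ)⁻¹ := by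
  rcases eq_or_ne b 0 with rfl | hb0
  · have : ∫⁻ x, a x ∂μ = 0 := (lintegral_congr_ae (hab.mono fun x => le_bot_iff.1)).trans
      lintegral_zero
    simp [this]
  have hmean : ∫⁻ x, interp (interpExponent (a x / b)) (a x / b)⁻¹ 1 ∂μ + (∫⁻ x, a x ∂μ) / b
      ≤ 2 := by
    calc _ = ∫⁻ x, interp (interpExponent (a x / b)) (a x / b)⁻¹ 1 + a x / b ∂μ := by
          simp only [div_eq_mul_inv]
          rw [lintegral_add_right' _ (ha.mul_const _), lintegral_mul_const'' _ ha]
      _ ≤ ∫⁻ _, 2 ∂μ := lintegral_mono_ae <| hab.mono fun x hx =>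
          interp_interpExponent_add_le_two (ENNReal.div_le_of_le_mul (by simpa using hx))
      _ = 2 := by simp
  calc ∫⁻ x, interp (interpExponent (a x / b)) (a x)⁻¹ b⁻¹ ∂μ
      = b⁻¹ * ∫⁻ x, interp (interpExponent (a x / b)) (a x / b)⁻¹ 1 ∂μ := by
        rw [← lintegral_const_mul' _ _ (ENNReal.inv_ne_top.2 hb0)]
        simp only [interp_inv_inv (interpExponent_mem_Icc _).2 hb0 hb]
    _ ≤ b⁻¹ * ((∫⁻ x, a x ∂μ) / b)⁻¹ := by
        gcongr
        exact le_inv_of_add_le_two hmean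
    _ = (∫⁻ x, a x ∂μ)⁻¹ := by
        rw [ENNReal.inv_div (.inl hb) (.inl hb0), div_eq_mul_inv, ← mul_assoc,
          ENNReal.inv_mul_cancel hb0 hb, one_mul]

end Interpolation

section ConvexPotential

variable {ι : Type*} [Fintype ι] {Ω : ι → Type*}

/-- The Hamming distance in which a disagreement in the coordinate `i` costs `b i`, which may be
negative. -/
noncomputable def weightedHamming (b : ι → ℝ) (x y : ∀ i, Ω i) : ℝ :=
  ∑ i with x i ≠ y i, b i

/-- Talagrand's convex distance over an arbitrary finite index type; `talagrandDist` is the case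
`ι = Fin n`. -/
noncomputable def convexDist (x : ∀ i, Ω i) (A : Set (∀ i, Ω i)) : ℝ :=
  ⨆ b : {b : ι → ℝ // ∑ i, b i ^ 2 = 1}, ⨅ y : A, weightedHamming b.1 x y.1

/-- The supremum over `b` of `inf_{y ∈ A} exp (weightedHamming b x y - ‖b‖²)`, which stands for
`exp (d(x, A)² / 4)`. As its values lie in `ℝ≥0∞`, it is `∞` rather than a junk value for
`A = ∅`. -/
noncomputable def convexPotential (x : ∀ i, Ω i) (A : Set (∀ i, Ω i)) : ℝ≥0∞ :=
  ⨆ b : ι → ℝ, ⨅ y ∈ A, ENNReal.ofReal (Real.exp (weightedHamming b x y - ∑ i, b i ^ 2))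

theorem weightedHamming_smul (c : ℝ) (b : ι → ℝ) (x y : ∀ i, Ω i) :
    weightedHamming (c • b) x y = c * weightedHamming b x y := by
  simp only [weightedHamming, Pi.smul_apply, smul_eq_mul, Finset.mul_sum]

theorem bddBelow_range_weightedHamming (b : ι → ℝ) (x : ∀ i, Ω i) :
    BddBelow (Set.range (weightedHamming b x)) := by
  have hfinite : (Set.range fun s : Finset ι => ∑ i ∈ s, b i).Finite := Set.finite_range _
  refine hfinite.bddBelow.mono ?_
  rintro _ ⟨y, rfl⟩
  exact ⟨_, rfl⟩

theorem ofReal_exp_le_convexPotential_of_lt_convexDist {x : ∀ i, Ω i} {A : Set (∀ i, Ω i)} {t : ℝ}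
    (ht : 0 ≤ t) (h : t < convexDist x A) :
    ENNReal.ofReal (Real.exp (t ^ 2 / 4)) ≤ convexPotential x A := by
  obtain ⟨⟨b, hb⟩, hbt⟩ : ∃ b : {b : ι → ℝ // ∑ i, b i ^ 2 = 1},
      t < ⨅ y : A, weightedHamming b.1 x y.1 := by
    contrapose! h
    exact Real.iSup_le h ht
  have hlt (y) (hy : y ∈ A) : t < weightedHamming b x y := hbt.trans_le <|
    ciInf_le ((bddBelow_range_weightedHamming b x).mono
      (Set.range_comp_subset_range _ (weightedHamming b x))) (⟨y, hy⟩ : A)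
  -- Among the multiples `c • b`, the gap `c * t - c²` is largest at `c = t / 2`.
  refine le_iSup_of_le ((t / 2) • b) (le_iInf₂ fun y hy => ?_)
  have hnorm : ∑ i, ((t / 2) • b) i ^ 2 = t ^ 2 / 4 := by
    simp only [Pi.smul_apply, smul_eq_mul, mul_pow, ← Finset.mul_sum, hb]
    ring
  rw [weightedHamming_smul, hnorm]
  gcongr
  nlinarith [hlt y hy]

theorem convexPotential_le_one_of_mem {x : ∀ i, Ω i} {A : Set (∀ i, Ω i)} (hx : x ∈ A) :
    convexPotential x A ≤ 1 := by
  refine iSup_le fun b => iInf₂_le_of_le x hx ?_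
  simp [weightedHamming, Finset.sum_nonneg, sq_nonneg]

theorem convexPotential_le_comp_equiv {κ : Type*} [Fintype κ] (e : κ ≃ ι) (x : ∀ i, Ω i)
    (A : Set (∀ i, Ω i)) :
    convexPotential x A ≤
      convexPotential (fun k => x (e k)) (Equiv.piCongrLeft Ω e ⁻¹' A) := by
  refine iSup_le fun b => le_iSup_of_le (b ∘ e) (le_iInf₂ fun y hy => iInf₂_le_of_le _ hy ?_)
  have hcost : weightedHamming b x (Equiv.piCongrLeft Ω e y) =
      weightedHamming (b ∘ e) (fun k => x (e k)) y := by
    simp only [weightedHamming, Finset.sum_filter, ← e.sum_comp, Equiv.piCongrLeft_apply_apply,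
      Function.comp_apply]
  rw [hcost, ← e.sum_comp]
  rfl

end ConvexPotential

section Step

variable {n : ℕ} {Ω : Fin (n + 1) → Type*}

theorem weightedHamming_insertNth (p : Fin (n + 1)) (b : Fin (n + 1) → ℝ) (x : ∀ i, Ω i)
    (ω : Ω p) (y : ∀ j, Ω (p.succAbove j)) :
    weightedHamming b x (p.insertNth ω y) =
      (if x p ≠ ω then b p else 0) + weightedHamming (p.removeNth b) (p.removeNth x) y := by
  rw [weightedHamming, weightedHamming, Finset.sum_filter, Finset.sum_filter,
    Fin.sum_univ_succAbove _ p]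
  simp only [Fin.insertNth_apply_same, Fin.insertNth_apply_succAbove, Fin.removeNth]
  congr!

theorem convexPotential_le_interp (p : Fin (n + 1)) (x : ∀ i, Ω i) {A : Set (∀ i, Ω i)}
    {C B : Set (∀ j, Ω (p.succAbove j))} (hC : ∀ y ∈ C, p.insertNth (x p) y ∈ A)
    (hB : ∀ y ∈ B, ∃ ω, p.insertNth ω y ∈ A) {θ : ℝ} (hθ : θ ∈ Set.Icc 0 1) :
    convexPotential x A ≤
      interp θ (convexPotential (p.removeNth x) C) (convexPotential (p.removeNth x) B) := by
  refine iSup_le fun b => ?_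
  set I := ⨅ y ∈ A, ENNReal.ofReal (Real.exp (weightedHamming b x y - ∑ i, b i ^ 2))
  have hreduce {D : Set (∀ j, Ω (p.succAbove j))} {s : ℝ}
      (hD : ∀ y ∈ D, ∃ ω, p.insertNth ω y ∈ A ∧ (if x p ≠ ω then b p else 0) ≤ s) :
      ENNReal.ofReal (Real.exp (b p ^ 2 - s)) * I ≤ convexPotential (p.removeNth x) D := by
    refine le_iSup_of_le (p.removeNth b) (le_iInf₂ fun y hy => ?_)
    obtain ⟨ω, hω, hs⟩ := hD y hy
    calc ENNReal.ofReal (Real.exp (b p ^ 2 - s)) * I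
        ≤ ENNReal.ofReal (Real.exp (b p ^ 2 - s)) * ENNReal.ofReal (Real.exp
            (weightedHamming b x (p.insertNth ω y) - ∑ i, b i ^ 2)) := by
          gcongr
          exact iInf₂_le _ hω
      _ ≤ _ := by
          rw [← ENNReal.ofReal_mul (Real.exp_pos _).le, ← Real.exp_add,
            weightedHamming_insertNth, Fin.sum_univ_succAbove _ p]
          gcongr
          simp only [Fin.removeNth]
          linarith
  have hslice : ENNReal.ofReal (Real.exp (b p ^ 2 - 0)) * I ≤
      convexPotential (p.removeNth x) C :=
    hreduce fun y hy => ⟨x p, hC y hy, by simp⟩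
  have hproj : ENNReal.ofReal (Real.exp (b p ^ 2 - max (b p) 0)) * I ≤
      convexPotential (p.removeNth x) B :=
    hreduce fun y hy => (hB y hy).imp fun ω hω => ⟨hω, by split_ifs <;> simp⟩
  have hexponent_nonneg :
      0 ≤ (b p ^ 2 - 0) * (1 - θ) + (b p ^ 2 - max (b p) 0) * θ + θ ^ 2 / 4 := by
    rcases max_cases (b p) 0 with ⟨h, -⟩ | ⟨h, -⟩ <;> rw [h] <;>
      nlinarith [sq_nonneg (b p - θ / 2), sq_nonneg (b p), sq_nonneg θ]
  calc I ≤ ENNReal.ofReal (Real.exp ((b p ^ 2 - 0) * (1 - θ) + (b p ^ 2 - max (b p) 0) * θ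
          + θ ^ 2 / 4)) * I := by
        refine le_mul_of_one_le_left zero_le ?_
        simpa using hexponent_nonneg
    _ = interp θ (ENNReal.ofReal (Real.exp (b p ^ 2 - 0)) * I)
          (ENNReal.ofReal (Real.exp (b p ^ 2 - max (b p) 0)) * I) := by
        have hI : I = I ^ (1 - θ) * I ^ θ := by
          rw [← ENNReal.rpow_add_of_nonneg _ _ (sub_nonneg.2 hθ.2) hθ.1, sub_add_cancel,
            ENNReal.rpow_one]
        rw [interp, ENNReal.mul_rpow_of_nonneg _ _ (sub_nonneg.2 hθ.2),
          ENNReal.mul_rpow_of_nonneg _ _ hθ.1, ENNReal.ofReal_rpow_of_pos (Real.exp_pos _),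
          ENNReal.ofReal_rpow_of_pos (Real.exp_pos _), ← Real.exp_mul, ← Real.exp_mul,
          Real.exp_add, Real.exp_add, ENNReal.ofReal_mul (by positivity),
          ENNReal.ofReal_mul (by positivity)]
        nth_rewrite 1 [hI]
        ring
    _ ≤ _ := interp_mono hθ hslice hproj

end Step

section Majorant

/-- `G` is a jointly measurable majorant of the convex potentials of the sections
`A_τ = Prod.mk τ ⁻¹' A`, with mean at most `1 / μ A_τ` for every value of the parameter `τ`. -/
structure IsPotentialMajorant {ι T : Type*} [Fintype ι] {Ω : ι → Type*}
    [∀ i, MeasurableSpace (Ω i)] [MeasurableSpace T] (μ : Measure (∀ i, Ω i))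
    (A : Set (T × ∀ i, Ω i)) (G : T × (∀ i, Ω i) → ℝ≥0∞) : Prop where
  measurable : Measurable G
  potential_le (τ : T) (x : ∀ i, Ω i) : convexPotential x (Prod.mk τ ⁻¹' A) ≤ G (τ, x)
  lintegral_le (τ : T) : ∫⁻ x, G (τ, x) ∂μ ≤ (μ (Prod.mk τ ⁻¹' A))⁻¹

theorem IsPotentialMajorant.measure_mul_measure_le {ι T : Type*} [Fintype ι] {Ω : ι → Type*}
    [∀ i, MeasurableSpace (Ω i)] [MeasurableSpace T] {μ : Measure (∀ i, Ω i)}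
    {A : Set (T × ∀ i, Ω i)} {G : T × (∀ i, Ω i) → ℝ≥0∞} (hG : IsPotentialMajorant μ A G) (τ : T)
    (c : ℝ≥0∞) :
    μ (Prod.mk τ ⁻¹' A) * μ {x | c ≤ convexPotential x (Prod.mk τ ⁻¹' A)} ≤ c⁻¹ := by
  have hmarkov : c * μ {x | c ≤ convexPotential x (Prod.mk τ ⁻¹' A)} ≤
      (μ (Prod.mk τ ⁻¹' A))⁻¹ :=
    calc c * μ {x | c ≤ convexPotential x (Prod.mk τ ⁻¹' A)}
        ≤ c * μ {x | c ≤ G (τ, x)} := by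
          gcongr with x
          exact hG.potential_le τ x
      _ ≤ ∫⁻ x, G (τ, x) ∂μ :=
          mul_meas_ge_le_lintegral (hG.measurable.comp measurable_prodMk_left) c
      _ ≤ _ := hG.lintegral_le τ
  rw [ENNReal.le_inv_iff_mul_le] at hmarkov ⊢
  rwa [mul_comm, ← mul_assoc, mul_right_comm]

theorem isPotentialMajorant_inv_measure_of_isEmpty {ι T : Type*} [Fintype ι] [IsEmpty ι]
    {Ω : ι → Type*} [∀ i, MeasurableSpace (Ω i)] [MeasurableSpace T] (μ : Measure (∀ i, Ω i))
    [IsProbabilityMeasure μ] {A : Set (T × ∀ i, Ω i)} (hA : MeasurableSet A) :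
    IsPotentialMajorant μ A fun q => (μ (Prod.mk q.1 ⁻¹' A))⁻¹ where
  measurable := (measurable_measure_prodMk_left hA).inv.comp measurable_fst
  potential_le τ x := by
    rcases (Prod.mk τ ⁻¹' A).eq_empty_or_nonempty with hempty | ⟨y, hy⟩
    · simp [hempty]
    · rw [← Subsingleton.elim x y] at hy
      exact (convexPotential_le_one_of_mem hy).trans (ENNReal.one_le_inv.2 prob_le_one)
  lintegral_le τ := by simp

variable {n : ℕ} {Ω : Fin (n + 1) → Type*} {T : Type*}

/-- The set `A` with the coordinate `p` moved into the parameter, so that its sections are the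
slices of the sections of `A`. -/
def coordSlice (p : Fin (n + 1)) (A : Set (T × ∀ i, Ω i)) :
    Set ((T × Ω p) × ∀ j, Ω (p.succAbove j)) :=
  {q | (q.1.1, p.insertNth q.1.2 q.2) ∈ A}

/-- The essential projection of `A` along the coordinate `p`: the points whose fibre has positive
measure. Unlike the projection it is measurable. -/
def essProjection (p : Fin (n + 1)) [MeasurableSpace (Ω p)] (μ : Measure (Ω p))
    (A : Set (T × ∀ i, Ω i)) : Set (T × ∀ j, Ω (p.succAbove j)) :=
  {q | 0 < μ {ω | ((q.1, ω), q.2) ∈ coordSlice p A}}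

variable [∀ i, MeasurableSpace (Ω i)] [MeasurableSpace T] (p : Fin (n + 1))
  {A : Set (T × ∀ i, Ω i)}

theorem measurableSet_coordSlice (hA : MeasurableSet A) : MeasurableSet (coordSlice p A) := by
  have hinsert : Measurable fun q : Ω p × (∀ j, Ω (p.succAbove j)) =>
      (p.insertNth q.1 q.2 : ∀ i, Ω i) :=
    (MeasurableEquiv.piFinSuccAbove Ω p).symm.measurable
  have hmap : Measurable fun q : (T × Ω p) × (∀ j, Ω (p.succAbove j)) =>
      (q.1.1, (p.insertNth q.1.2 q.2 : ∀ i, Ω i)) := by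
    fun_prop
  exact hmap hA

theorem measurableSet_essProjection (μ : Measure (Ω p)) [SFinite μ] (hA : MeasurableSet A) :
    MeasurableSet (essProjection p μ A) := by
  have hmap : Measurable fun q : (T × ∀ j, Ω (p.succAbove j)) × Ω p => ((q.1.1, q.2), q.1.2) := by
    fun_prop
  exact measurableSet_lt measurable_const
    (measurable_measure_prodMk_left (hmap (measurableSet_coordSlice p hA)))

theorem ae_measure_coordSlice_le_essProjection (μ : Measure (Ω p)) [SFinite μ]
    (ν : Measure (∀ j, Ω (p.succAbove j))) [SFinite ν] (hA : MeasurableSet A) (τ : T) :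
    ∀ᵐ ω ∂μ, ν (Prod.mk (τ, ω) ⁻¹' coordSlice p A) ≤ ν (Prod.mk τ ⁻¹' essProjection p μ A) := by
  set C : Set (Ω p × ∀ j, Ω (p.succAbove j)) := {q | ((τ, q.1), q.2) ∈ coordSlice p A}
  set B := Prod.mk τ ⁻¹' essProjection p μ A
  have hmap : Measurable fun q : Ω p × (∀ j, Ω (p.succAbove j)) => ((τ, q.1), q.2) := by fun_prop
  have hC : MeasurableSet C := hmap (measurableSet_coordSlice p hA)
  have hB : MeasurableSet B := measurable_prodMk_left (measurableSet_essProjection p μ hA)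
  have hnull_fibre (z) : ∀ᵐ ω ∂μ, (ω, z) ∈ C → z ∈ B := by
    by_cases hz : z ∈ B
    · exact .of_forall fun _ _ => hz
    · have hzero : μ {ω | (ω, z) ∈ C} = 0 := nonpos_iff_eq_zero.1 (not_lt.1 hz)
      filter_upwards [measure_eq_zero_iff_ae_notMem.1 hzero] with ω hω hmem
      exact absurd hmem hω
  have hnull_slice : ∀ᵐ ω ∂μ, ∀ᵐ z ∂ν, (ω, z) ∈ C → z ∈ B :=
    (Measure.ae_ae_comm (hC.imp (measurable_snd hB))).2 (.of_forall hnull_fibre)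
  filter_upwards [hnull_slice] with ω hω using measure_mono_ae hω

variable (μ : ∀ i, Measure (Ω i)) {G₁ : (T × Ω p) × (∀ j, Ω (p.succAbove j)) → ℝ≥0∞}
  {G₂ : T × (∀ j, Ω (p.succAbove j)) → ℝ≥0∞}

section SigmaFinite

variable [∀ i, SigmaFinite (μ i)]

theorem lintegral_pi_eq_lintegral_lintegral_insertNth {f : (∀ i, Ω i) → ℝ≥0∞} (hf : Measurable f) :
    ∫⁻ x, f x ∂Measure.pi μ =
      ∫⁻ ω, ∫⁻ y, f (p.insertNth ω y) ∂Measure.pi (fun j => μ (p.succAbove j)) ∂μ p := by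
  have he := (measurePreserving_piFinSuccAbove μ p).symm
  rw [← he.lintegral_comp hf]
  exact lintegral_prod _ (hf.comp he.measurable).aemeasurable

theorem measure_pi_eq_lintegral_coordSlice (hA : MeasurableSet A) (τ : T) :
    Measure.pi μ (Prod.mk τ ⁻¹' A) = ∫⁻ ω, Measure.pi (fun j => μ (p.succAbove j))
      (Prod.mk (τ, ω) ⁻¹' coordSlice p A) ∂μ p := by
  have he := (measurePreserving_piFinSuccAbove μ p).symm
  have hAτ : MeasurableSet (Prod.mk τ ⁻¹' A) := measurable_prodMk_left hA
  rw [← he.measure_preimage hAτ.nullMeasurableSet, Measure.prod_apply (he.measurable hAτ)]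
  rfl

/-- The ratio `Pr(slice at ω) / Pr(essential projection)` at the point `q = (τ, ω)`. -/
noncomputable def sliceRatio (A : Set (T × ∀ i, Ω i)) (q : T × Ω p) : ℝ≥0∞ :=
  Measure.pi (fun j => μ (p.succAbove j)) (Prod.mk q ⁻¹' coordSlice p A) /
    Measure.pi (fun j => μ (p.succAbove j)) (Prod.mk q.1 ⁻¹' essProjection p (μ p) A)

theorem measurable_sliceRatio (hA : MeasurableSet A) : Measurable (sliceRatio p μ A) :=
  (measurable_measure_prodMk_left (measurableSet_coordSlice p hA)).div
    ((measurable_measure_prodMk_left (measurableSet_essProjection p (μ p) hA)).comp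
      measurable_fst)

/-- The majorant for `A` built in the induction step from majorants `G₁` for the slices and `G₂` for
the essential projection. -/
noncomputable def interpMajorant (A : Set (T × ∀ i, Ω i))
    (G₁ : (T × Ω p) × (∀ j, Ω (p.succAbove j)) → ℝ≥0∞)
    (G₂ : T × (∀ j, Ω (p.succAbove j)) → ℝ≥0∞) (q : T × ∀ i, Ω i) : ℝ≥0∞ :=
  interp (interpExponent (sliceRatio p μ A (q.1, q.2 p)))
    (G₁ ((q.1, q.2 p), p.removeNth q.2)) (G₂ (q.1, p.removeNth q.2))

theorem measurable_interpMajorant (hA : MeasurableSet A) (hG₁ : Measurable G₁)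
    (hG₂ : Measurable G₂) : Measurable (interpMajorant p μ A G₁ G₂) := by
  have hratio := measurable_sliceRatio p μ hA
  have hremove : Measurable (p.removeNth : (∀ i, Ω i) → _) :=
    (MeasurableEquiv.piFinSuccAbove Ω p).measurable.snd
  exact measurable_interp (by fun_prop) (by fun_prop) (by fun_prop)

theorem lintegral_interpMajorant_le (hA : MeasurableSet A) (hG₁ : Measurable G₁)
    (hG₂ : Measurable G₂) (τ : T) :
    ∫⁻ x, interpMajorant p μ A G₁ G₂ (τ, x) ∂Measure.pi μ ≤
      ∫⁻ ω, interp (interpExponent (sliceRatio p μ A (τ, ω)))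
        (∫⁻ y, G₁ ((τ, ω), y) ∂Measure.pi fun j => μ (p.succAbove j))
        (∫⁻ y, G₂ (τ, y) ∂Measure.pi fun j => μ (p.succAbove j)) ∂μ p := by
  have hG := (measurable_interpMajorant p μ hA hG₁ hG₂).comp (measurable_prodMk_left (x := τ))
  refine (lintegral_pi_eq_lintegral_lintegral_insertNth p μ hG).trans_le ?_
  simp only [Function.comp_apply, interpMajorant, Fin.insertNth_apply_same,
    Fin.removeNth_insertNth]
  exact lintegral_mono fun ω => lintegral_interp_le (interpExponent_mem_Icc _)
    (hG₁.comp measurable_prodMk_left).aemeasurable (hG₂.comp measurable_prodMk_left).aemeasurable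

end SigmaFinite

theorem isPotentialMajorant_interpMajorant [∀ i, IsProbabilityMeasure (μ i)]
    (hA : MeasurableSet A)
    (hG₁ : IsPotentialMajorant (Measure.pi fun j => μ (p.succAbove j)) (coordSlice p A) G₁)
    (hG₂ : IsPotentialMajorant (Measure.pi fun j => μ (p.succAbove j))
      (essProjection p (μ p) A) G₂) :
    IsPotentialMajorant (Measure.pi μ) A (interpMajorant p μ A G₁ G₂) where
  measurable := measurable_interpMajorant p μ hA hG₁.measurable hG₂.measurable
  potential_le τ x :=
    (convexPotential_le_interp p x (C := Prod.mk (τ, x p) ⁻¹' coordSlice p A)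
      (B := Prod.mk τ ⁻¹' essProjection p (μ p) A) (fun _ hy => hy)
      (fun _ hy => nonempty_of_measure_ne_zero (ne_of_gt hy)) (interpExponent_mem_Icc _)).trans
    (interp_mono (interpExponent_mem_Icc _) (hG₁.potential_le _ _) (hG₂.potential_le _ _))
  lintegral_le τ := by
    refine (lintegral_interpMajorant_le p μ hA hG₁.measurable hG₂.measurable τ).trans ?_
    rw [measure_pi_eq_lintegral_coordSlice p μ hA τ]
    have hslice := (measurable_measure_prodMk_left (ν := Measure.pi fun j => μ (p.succAbove j))
      (measurableSet_coordSlice p hA)).comp (measurable_prodMk_left (x := τ))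
    refine (lintegral_mono fun ω => ?_).trans (lintegral_interp_inv_le hslice.aemeasurable
      (measure_ne_top _ _) (ae_measure_coordSlice_le_essProjection p (μ p) _ hA τ))
    exact interp_mono (interpExponent_mem_Icc _) (hG₁.lintegral_le _) (hG₂.lintegral_le _)

end Majorant

theorem exists_isPotentialMajorant_fin {n : ℕ} {Ω : Fin n → Type u} [∀ i, MeasurableSpace (Ω i)]
    (μ : ∀ i, Measure (Ω i)) [∀ i, IsProbabilityMeasure (μ i)] {T : Type u} [MeasurableSpace T]
    {A : Set (T × ∀ i, Ω i)} (hA : MeasurableSet A) :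
    ∃ G, IsPotentialMajorant (Measure.pi μ) A G := by
  induction n generalizing T with
  | zero => exact ⟨_, isPotentialMajorant_inv_measure_of_isEmpty _ hA⟩
  | succ n ih =>
    obtain ⟨G₁, hG₁⟩ := ih (fun j => μ (Fin.succAbove 0 j)) (measurableSet_coordSlice 0 hA)
    obtain ⟨G₂, hG₂⟩ := ih (fun j => μ (Fin.succAbove 0 j))
      (measurableSet_essProjection 0 (μ 0) hA)
    exact ⟨_, isPotentialMajorant_interpMajorant 0 μ hA hG₁ hG₂⟩

section Tail

variable {ι : Type*} [Fintype ι] {Ω : ι → Type u} [∀ i, MeasurableSpace (Ω i)]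
  (μ : ∀ i, Measure (Ω i)) [∀ i, IsProbabilityMeasure (μ i)]

theorem measure_pi_mul_measure_le_convexPotential_le {A : Set (∀ i, Ω i)} (hA : MeasurableSet A)
    (c : ℝ≥0∞) :
    Measure.pi μ A * Measure.pi μ {x | c ≤ convexPotential x A} ≤ c⁻¹ := by
  let e := (Fintype.equivFin ι).symm
  let E := MeasurableEquiv.piCongrLeft Ω e
  have hE : MeasurePreserving E (Measure.pi fun k => μ (e k)) (Measure.pi μ) :=
    measurePreserving_piCongrLeft μ e
  obtain ⟨G, hG⟩ := exists_isPotentialMajorant_fin (fun k => μ (e k)) (T := PUnit)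
    (measurable_snd (E.measurable hA))
  have hpull (y) : convexPotential (E y) A ≤ convexPotential y (E ⁻¹' A) := by
    refine (convexPotential_le_comp_equiv e (E y) A).trans_eq ?_
    congr 1
    exact funext fun k => Equiv.piCongrLeft_apply_apply Ω e y k
  calc Measure.pi μ A * Measure.pi μ {x | c ≤ convexPotential x A}
      = (Measure.pi fun k => μ (e k)) (E ⁻¹' A) *
          (Measure.pi fun k => μ (e k)) (E ⁻¹' {x | c ≤ convexPotential x A}) := by
        rw [hE.measure_preimage_equiv, hE.measure_preimage_equiv]
    _ ≤ (Measure.pi fun k => μ (e k)) (E ⁻¹' A) *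
          (Measure.pi fun k => μ (e k)) {y | c ≤ convexPotential y (E ⁻¹' A)} := by
        gcongr
        exact fun y hy => le_trans hy (hpull y)
    _ ≤ c⁻¹ := hG.measure_mul_measure_le PUnit.unit c

theorem stmt_15_general {A : Set (∀ i, Ω i)} (hA : MeasurableSet A) {t : ℝ} (ht : 0 ≤ t) :
    (Measure.pi μ A).toReal * (Measure.pi μ {x | ¬ convexDist x A ≤ t}).toReal ≤
      Real.exp (-t ^ 2 / 4) := by
  have htail : {x | ¬ convexDist x A ≤ t} ⊆
      {x | ENNReal.ofReal (Real.exp (t ^ 2 / 4)) ≤ convexPotential x A} := fun _ hx =>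
    ofReal_exp_le_convexPotential_of_lt_convexDist ht (not_le.1 hx)
  rw [← ENNReal.toReal_mul]
  refine ENNReal.toReal_le_of_le_ofReal (Real.exp_pos _).le ?_
  calc Measure.pi μ A * Measure.pi μ {x | ¬ convexDist x A ≤ t}
      ≤ Measure.pi μ A * Measure.pi μ
          {x | ENNReal.ofReal (Real.exp (t ^ 2 / 4)) ≤ convexPotential x A} := by gcongr
    _ ≤ (ENNReal.ofReal (Real.exp (t ^ 2 / 4)))⁻¹ :=
        measure_pi_mul_measure_le_convexPotential_le μ hA _
    _ = ENNReal.ofReal (Real.exp (-t ^ 2 / 4)) := by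
        rw [← ENNReal.ofReal_inv_of_pos (Real.exp_pos _), ← Real.exp_neg, neg_div]

end Tail

theorem stmt_15 {n : ℕ} (Ω : Fin n → Type) [∀ i, MeasureSpace (Ω i)]
    [∀ i, IsProbabilityMeasure (volume : Measure (Ω i))]
    (A : Set (∀ i, Ω i)) (hA : MeasurableSet A) (t : ℝ) (ht : 0 ≤ t) :
    ((prodMeasure Ω) A).toReal *
        ((prodMeasure Ω) {x | ¬ talagrandDist x A ≤ t}).toReal ≤
      Real.exp (-t ^ 2 / 4) :=
  stmt_15_general (fun i => (volume : Measure (Ω i))) hA ht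
end
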